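/- Let Ω ⊂ ℝⁿ be a connected, bounded, open set whose boundary is of class C². Suppose there exists a function u ∈ C²(cl Ω) satisfying −Δu = 1 in Ω, u = 0 on ∂Ω, and ∂u/∂ν = c on ∂Ω, where ν is the inward unit normal to ∂Ω and c is a real constant. Then Ω is a ball B_R(x₀) of some radius R centered at some point x₀, and u(x) = (R² − |x − x₀|²)/(2n). -/

import Mathlib

/-!
The proof is of Weinberger type, with all boundary integrals replaced by integrals over thin layers
`{ε ≤ u ≤ 2ε}`, so that only the divergence theorem for compactly supported fields is needed.

By Cauchy-Schwarz, `|D²u|² ≥ (Δu)²/n = 1/n`, with equality exactly when `D²u = -I/n`. Let `η` be a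
smooth cutoff with `η = 0` on `(-∞, ε]` and `η = 1` on `[2ε, ∞)`, and `h` its primitive. Since every
`∂ᵢu` is weakly harmonic (which needs only `u ∈ C²`),
`∫ h(u) (|D²u|² - 1/n) = -∫ η(u) (D²u(∇u,∇u) + |∇u|²/n)`,
and the bracket on the right is the divergence of a field `Y` (`serrinField`), built from
`(|∇u|² + 2u/n - c²) ∇u` and a Pohozaev field. Hence the left side equals `∫ η'(u) ∇u·Y`
(`integral_identities`). On the boundary `∇u·Y = 0`, so `∇u·Y ≤ κ |∇u|²` in the layer once `ε` is
small (`serrinField_small`), while `∫ η'(u) |∇u|² = ∫ η(u) ≤ |Ω|`. As `κ → 0`, the continuous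
function `|D²u|² - 1/n ≥ 0` must vanish (`hessSq_le`).

The boundary input is: `u > 0` in `Ω` by the minimum principle (`superharmonic_pos`);
`|∇u|² → c²` uniformly at the boundary, because `u` vanishes on `∂Ω` and so `∇u = c ν` there
(`gradSq_near_boundary`); and `c ≠ 0` by Hopf's lemma (`normal_deriv_ne_zero`).

Finally `D²u = -I/n` on a connected set makes `u` a paraboloid (`exists_paraboloid`), and a domain
on which it is positive, with zero boundary values, is a ball (`eq_ball_of_paraboloid`).
-/

open Metric Set MeasureTheory Filter Bornology
open scoped RealInnerProductSpace Topology

noncomputable section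

/-- The Laplacian of `u : ℝⁿ → ℝ`, as the sum of the pure second partial derivatives. -/
def lap {n : ℕ} (u : EuclideanSpace ℝ (Fin n) → ℝ) (x : EuclideanSpace ℝ (Fin n)) : ℝ :=
  ∑ i : Fin n, iteratedFDeriv ℝ 2 u x ![EuclideanSpace.single i 1, EuclideanSpace.single i 1]

/-- `Ω` is a domain of class `C²`, with `ν` its inward unit normal on `∂Ω`: near each boundary
point, `Ω` is the sublevel set `{φ < 0}` of a `C²` defining function `φ` with nonvanishing
gradient, and `ν = -∇φ/‖∇φ‖` on the boundary. -/
def IsC2DomainWithInnerNormal {n : ℕ} (Ω : Set (EuclideanSpace ℝ (Fin n)))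
    (ν : EuclideanSpace ℝ (Fin n) → EuclideanSpace ℝ (Fin n)) : Prop :=
  ∀ x ∈ frontier Ω, ∃ (U : Set (EuclideanSpace ℝ (Fin n))) (φ : EuclideanSpace ℝ (Fin n) → ℝ),
    IsOpen U ∧ x ∈ U ∧ ContDiffOn ℝ 2 φ U ∧ (∀ y ∈ U, gradient φ y ≠ 0) ∧
    Ω ∩ U = {y ∈ U | φ y < 0} ∧ frontier Ω ∩ U = {y ∈ U | φ y = 0} ∧
    ∀ y ∈ frontier Ω ∩ U, ν y = -(‖gradient φ y‖⁻¹ • gradient φ y)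

/-! ### Partial derivatives -/

/-- The partial derivative `∂ᵢ f`. -/
def pd {n : ℕ} (i : Fin n) (f : EuclideanSpace ℝ (Fin n) → ℝ) (x : EuclideanSpace ℝ (Fin n)) : ℝ :=
  fderiv ℝ f x (EuclideanSpace.single i 1)

section Calculus

variable {n : ℕ} {Ω K : Set (EuclideanSpace ℝ (Fin n))} {f g u : EuclideanSpace ℝ (Fin n) → ℝ}

lemma contDiffOn_pd (hΩ : IsOpen Ω) {k m : WithTop ℕ∞} (hu : ContDiffOn ℝ k u Ω) (hk : m + 1 ≤ k)
    (i : Fin n) : ContDiffOn ℝ m (pd i u) Ω :=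
  (hu.fderiv_of_isOpen hΩ hk).clm_apply contDiffOn_const

lemma pd_pd_eq (hΩ : IsOpen Ω) (hu : ContDiffOn ℝ 2 u Ω) {x : EuclideanSpace ℝ (Fin n)}
    (hx : x ∈ Ω) (i j : Fin n) :
    pd j (pd i u) x = fderiv ℝ (fderiv ℝ u) x (EuclideanSpace.single j 1)
      (EuclideanSpace.single i 1) := by
  have h : DifferentiableAt ℝ (fderiv ℝ u) x :=
    ((hu.fderiv_of_isOpen hΩ (m := 1) (by norm_num)).contDiffAt (hΩ.mem_nhds hx)).differentiableAt
      (by norm_num)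
  have : HasFDerivAt (pd i u) _ x := h.hasFDerivAt.clm_apply
    (hasFDerivAt_const (EuclideanSpace.single i (1 : ℝ)) x)
  rw [pd, this.fderiv]
  simp

lemma pd_comm (hΩ : IsOpen Ω) (hu : ContDiffOn ℝ 2 u Ω) {x : EuclideanSpace ℝ (Fin n)}
    (hx : x ∈ Ω) (i j : Fin n) : pd j (pd i u) x = pd i (pd j u) x := by
  rw [pd_pd_eq hΩ hu hx, pd_pd_eq hΩ hu hx]
  exact ((hu.contDiffAt (hΩ.mem_nhds hx)).isSymmSndFDerivAt (by simp)) _ _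

lemma lap_eq (hΩ : IsOpen Ω) (hu : ContDiffOn ℝ 2 u Ω) {x : EuclideanSpace ℝ (Fin n)}
    (hx : x ∈ Ω) : lap u x = ∑ i, pd i (pd i u) x := by
  refine Finset.sum_congr rfl fun i _ => ?_
  rw [iteratedFDeriv_two_apply, pd_pd_eq hΩ hu hx]
  simp

lemma pd_congr {x : EuclideanSpace ℝ (Fin n)} (h : f =ᶠ[𝓝 x] g) (i : Fin n) :
    pd i f x = pd i g x := by
  rw [pd, pd, h.fderiv_eq]

/-- Restricting to a line through `x` turns identities between partial derivatives into
one-variable computations. -/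
lemma hasDerivAt_line {x : EuclideanSpace ℝ (Fin n)} (h : DifferentiableAt ℝ f x) (i : Fin n) :
    HasDerivAt (fun t : ℝ => f (x + t • EuclideanSpace.single i (1 : ℝ))) (pd i f x) 0 :=
  h.hasFDerivAt.hasLineDerivAt _

lemma pd_eq_of_hasDerivAt {x : EuclideanSpace ℝ (Fin n)} (h : DifferentiableAt ℝ f x) {i : Fin n}
    {d : ℝ} (hd : HasDerivAt (fun t : ℝ => f (x + t • EuclideanSpace.single i (1 : ℝ))) d 0) :
    pd i f x = d :=
  (hasDerivAt_line h i).unique hd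

/-! ### The divergence theorem for compactly supported fields -/

lemma contDiff_of_support (hΩ : IsOpen Ω) (hK : IsCompact K) (hKΩ : K ⊆ Ω) {k : WithTop ℕ∞}
    (hf : ContDiffOn ℝ k f Ω) (h0 : ∀ x ∉ K, f x = 0) : ContDiff ℝ k f := by
  rw [contDiff_iff_contDiffAt]
  intro x
  by_cases hx : x ∈ Ω
  · exact hf.contDiffAt (hΩ.mem_nhds hx)
  · have : f =ᶠ[𝓝 x] fun _ => 0 := by
      filter_upwards [hK.isClosed.isOpen_compl.mem_nhds fun h => hx (hKΩ h)] with y hy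
      exact h0 y hy
    exact contDiffAt_const.congr_of_eventuallyEq this

lemma integrable_of_support (hΩ : IsOpen Ω) (hK : IsCompact K) (hKΩ : K ⊆ Ω)
    (hf : ContinuousOn f Ω) (h0 : ∀ x ∉ K, f x = 0) : Continuous f ∧ Integrable f := by
  have hc : Continuous f :=
    (contDiff_of_support (k := 0) hΩ hK hKΩ (contDiffOn_zero.2 hf) h0).continuous
  exact ⟨hc, hc.integrable_of_hasCompactSupport (HasCompactSupport.intro hK h0)⟩

lemma integral_pd_eq_zero (hΩ : IsOpen Ω) (hK : IsCompact K) (hKΩ : K ⊆ Ω)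
    (hf : ContDiffOn ℝ 1 f Ω) (h0 : ∀ x ∉ K, f x = 0) (i : Fin n) :
    Integrable (pd i f) ∧ ∫ x, pd i f x = 0 := by
  have hc := contDiff_of_support hΩ hK hKΩ hf h0
  have hs : HasCompactSupport f := HasCompactSupport.intro hK h0
  have hi : Integrable (pd i f) :=
    ((hc.continuous_fderiv (by norm_num)).clm_apply
      continuous_const).integrable_of_hasCompactSupport
      (hs.fderiv_apply ℝ (EuclideanSpace.single i (1 : ℝ)))
  refine ⟨hi, ?_⟩
  have := integral_mul_fderiv_eq_neg_fderiv_mul_of_integrable (𝕜 := ℝ) (f := fun _ => (1 : ℝ))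
    (g := f) (v := EuclideanSpace.single i (1 : ℝ)) (μ := volume) (by simp)
    (by simpa [pd] using! hi) (by
      simpa using hc.continuous.integrable_of_hasCompactSupport hs) (fun x _ => by fun_prop)
    (fun x _ => (hc.differentiable (by norm_num)) x)
  simpa [pd] using this

/-- The divergence theorem for a `C¹` vector field supported in a compact subset of `Ω`; the
divergence is only needed on `K`. -/
lemma integral_div_eq_zero (hΩ : IsOpen Ω) (hK : IsCompact K) (hKΩ : K ⊆ Ω)
    {V : Fin n → EuclideanSpace ℝ (Fin n) → ℝ} {d : EuclideanSpace ℝ (Fin n) → ℝ}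
    (hV : ∀ i, ContDiffOn ℝ 1 (V i) Ω) (h0 : ∀ i, ∀ x ∉ K, V i x = 0)
    (hd : ∀ x ∈ K, ∑ i, pd i (V i) x = d x) (hd0 : ∀ x ∉ K, d x = 0) :
    ∫ x, d x = 0 := by
  have : d = fun x => ∑ i, pd i (V i) x := by
    ext x
    by_cases hx : x ∈ K
    · exact (hd x hx).symm
    · rw [hd0 x hx]
      refine (Finset.sum_eq_zero fun i _ => ?_).symm
      have : V i =ᶠ[𝓝 x] fun _ => 0 := by
        filter_upwards [hK.isClosed.isOpen_compl.mem_nhds hx] with y hy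
        exact h0 i y hy
      rw [pd_congr this, pd]; simp
  rw [this, integral_finsetSum _ fun i _ => (integral_pd_eq_zero hΩ hK hKΩ (hV i) (h0 i) i).1]
  exact Finset.sum_eq_zero fun i _ => (integral_pd_eq_zero hΩ hK hKΩ (hV i) (h0 i) i).2

end Calculus

/-! ### Partial derivatives of a solution are weakly harmonic -/

section Weak

variable {n : ℕ} {Ω K : Set (EuclideanSpace ℝ (Fin n))} {f g u : EuclideanSpace ℝ (Fin n) → ℝ}

lemma hasDerivAt_line' {x : EuclideanSpace ℝ (Fin n)} (i : Fin n) {t : ℝ}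
    (h : DifferentiableAt ℝ f (x + t • EuclideanSpace.single i (1 : ℝ))) :
    HasDerivAt (fun s : ℝ => f (x + s • EuclideanSpace.single i (1 : ℝ)))
      (pd i f (x + t • EuclideanSpace.single i (1 : ℝ))) t := by
  have h1 : HasDerivAt (fun s : ℝ => x + s • EuclideanSpace.single i (1 : ℝ))
      (EuclideanSpace.single i (1 : ℝ)) t := by
    simpa using ((hasDerivAt_id t).smul_const (EuclideanSpace.single i (1 : ℝ))).const_add x
  exact h.hasFDerivAt.comp_hasDerivAt t h1

lemma pd_eq_zero_of_support (hK : IsCompact K) (h0 : ∀ x ∉ K, f x = 0) (i : Fin n)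
    {x : EuclideanSpace ℝ (Fin n)} (hx : x ∉ K) : pd i f x = 0 := by
  have : f =ᶠ[𝓝 x] fun _ => 0 := by
    filter_upwards [hK.isClosed.isOpen_compl.mem_nhds hx] with y hy
    exact h0 y hy
  rw [pd_congr this, pd]; simp

lemma pd_comp_add (a : EuclideanSpace ℝ (Fin n)) (i : Fin n) (x : EuclideanSpace ℝ (Fin n)) :
    pd i (fun y => f (y + a)) x = pd i f (x + a) := by
  rw [pd, fderiv_comp_add_right, pd]

/-- If `Δu` is the constant `-1` then each `∂ᵢu` is weakly harmonic, against `C¹` test functions.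
As `u` is only `C²`, this is obtained by differentiating in `h` the identity
`∫ ∇g(x) · ∇u(x + h eᵢ) dx = ∫ g`. -/
lemma integral_pd_mul_pd_pd (hΩ : IsOpen Ω) (hK : IsCompact K) (hKΩ : K ⊆ Ω)
    (hu : ContDiffOn ℝ 2 u Ω) (hlap : ∀ x ∈ Ω, ∑ j, pd j (pd j u) x = -1)
    (hg : ContDiffOn ℝ 1 g Ω) (h0 : ∀ x ∉ K, g x = 0) (i : Fin n) :
    ∫ x, ∑ j, pd j g x * pd i (pd j u) x = 0 := by
  set e : EuclideanSpace ℝ (Fin n) := EuclideanSpace.single i (1 : ℝ) with he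
  have hne : ‖e‖ = 1 := by simp [he]
  obtain ⟨r, hr, hrΩ⟩ := hK.exists_cthickening_subset_open hΩ hKΩ
  have hK' : IsCompact (cthickening r K) := hK.cthickening
  have hmem : ∀ x ∈ K, ∀ h ∈ ball (0 : ℝ) r, x + h • e ∈ cthickening r K := by
    intro x hx h hh
    refine mem_cthickening_of_dist_le _ x _ _ hx ?_
    rw [dist_eq_norm]
    simpa [norm_smul, hne] using (mem_ball_zero_iff.1 hh).le
  have hgc : ContDiff ℝ 1 g := contDiff_of_support hΩ hK hKΩ hg h0
  have hgd : Differentiable ℝ g := hgc.differentiable (by norm_num)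
  have hpg : ∀ j, Continuous (pd j g) := fun j =>
    (hgc.continuous_fderiv (by norm_num)).clm_apply continuous_const
  have hpg0 : ∀ j, ∀ x ∉ K, pd j g x = 0 := fun j x hx => pd_eq_zero_of_support hK h0 j hx
  have hpu : ∀ j, ContDiffOn ℝ 1 (pd j u) Ω := fun j => contDiffOn_pd hΩ hu (by norm_num) j
  have hppu : ∀ j k, ContinuousOn (pd k (pd j u)) Ω := fun j k =>
    (contDiffOn_pd (m := 0) hΩ (hpu j) (by norm_num) k).continuousOn
  have hdu : ∀ j, ∀ x ∈ Ω, DifferentiableAt ℝ (pd j u) x := fun j x hx =>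
    ((hpu j).contDiffAt (hΩ.mem_nhds hx)).differentiableAt (by norm_num)
  have key : ∀ h ∈ ball (0 : ℝ) r, Integrable (fun x => ∑ j, pd j g x * pd j u (x + h • e)) ∧
      ∫ x, ∑ j, pd j g x * pd j u (x + h • e) = ∫ x, g x := by
    intro h hh
    have hshift : Continuous fun x : EuclideanSpace ℝ (Fin n) => x + h • e := by fun_prop
    have hO : IsOpen (Ω ∩ (fun x => x + h • e) ⁻¹' Ω) := hΩ.inter (hΩ.preimage hshift)
    have hKO : K ⊆ Ω ∩ (fun x => x + h • e) ⁻¹' Ω := fun x hx =>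
      ⟨hKΩ hx, hrΩ (hmem x hx h hh)⟩
    have hsh : ∀ j, ContDiffOn ℝ 1 (fun x => pd j u (x + h • e))
        (Ω ∩ (fun x => x + h • e) ⁻¹' Ω) := fun j =>
      (hpu j).comp (by fun_prop) fun x hx => hx.2
    have hI : Integrable (fun x => ∑ j, pd j g x * pd j u (x + h • e)) := by
      refine (integrable_of_support hO hK hKO ?_ ?_).2
      · exact continuousOn_finsetSum _ fun j _ => (hpg j).continuousOn.mul (hsh j).continuousOn
      · intro x hx
        exact Finset.sum_eq_zero fun j _ => by rw [hpg0 j x hx, zero_mul]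
    refine ⟨hI, ?_⟩
    have hgI : Integrable g := (integrable_of_support hΩ hK hKΩ hg.continuousOn h0).2
    rw [← sub_eq_zero, ← integral_sub hI hgI]
    refine integral_div_eq_zero (V := fun j x => g x * pd j u (x + h • e)) hO hK hKO
      (fun j => hgc.contDiffOn.mul (hsh j)) (fun j x hx => by simp [h0 x hx]) ?_ ?_
    · intro x hx
      have h1 : ∀ j, pd j (fun x => g x * pd j u (x + h • e)) x =
          pd j g x * pd j u (x + h • e) + g x * pd j (pd j u) (x + h • e) := by
        intro j
        have hd : DifferentiableAt ℝ (fun x => pd j u (x + h • e)) x :=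
          ((hsh j).contDiffAt (hO.mem_nhds (hKO hx))).differentiableAt (by norm_num)
        refine pd_eq_of_hasDerivAt ((hgd x).mul hd) ?_
        have := (hasDerivAt_line (hgd x) j).mul (hasDerivAt_line hd j)
        simpa [pd_comp_add] using! this
      rw [Finset.sum_congr rfl fun j _ => h1 j, Finset.sum_add_distrib, ← Finset.mul_sum,
        hlap _ (hKO hx).2]
      ring
    · intro x hx
      rw [h0 x hx, sub_zero]
      exact Finset.sum_eq_zero fun j _ => by rw [hpg0 j x hx, zero_mul]
  have hM : ∀ j, ∃ M, ∀ x ∈ cthickening r K, ‖pd i (pd j u) x‖ ≤ M := fun j =>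
    hK'.exists_bound_of_continuousOn ((hppu j i).mono hrΩ)
  choose M hM using hM
  have hD := hasDerivAt_integral_of_dominated_loc_of_deriv_le (𝕜 := ℝ) (μ := volume)
    (F := fun h x => ∑ j, pd j g x * pd j u (x + h • e))
    (F' := fun h x => ∑ j, pd j g x * pd i (pd j u) (x + h • e))
    (x₀ := 0) (s := ball 0 r) (bound := fun x => ∑ j, ‖pd j g x‖ * M j)
    (ball_mem_nhds _ hr)
    (by filter_upwards [ball_mem_nhds (0 : ℝ) hr] with h hh using (key h hh).1.1)
    (key 0 (mem_ball_self hr)).1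
    (by
      refine (integrable_of_support hΩ hK hKΩ ?_ ?_).2.1
      · simpa using! continuousOn_finsetSum _ fun j _ => (hpg j).continuousOn.mul (hppu j i)
      · intro x hx
        exact Finset.sum_eq_zero fun j _ => by rw [hpg0 j x hx, zero_mul])
    (by
      refine Eventually.of_forall fun x h hh => ?_
      by_cases hx : x ∈ K
      · refine (norm_sum_le _ _).trans (Finset.sum_le_sum fun j _ => ?_)
        rw [norm_mul]
        exact mul_le_mul_of_nonneg_left (hM j _ (hmem x hx h hh)) (norm_nonneg _)
      · simp [hpg0 _ x hx])
    (by
      refine (integrable_of_support hΩ hK hKΩ ?_ ?_).2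
      · exact (continuous_finsetSum _ fun j _ => (hpg j).norm.mul continuous_const).continuousOn
      · intro x hx
        exact Finset.sum_eq_zero fun j _ => by rw [hpg0 j x hx, norm_zero, zero_mul])
    (by
      refine Eventually.of_forall fun x h hh => ?_
      by_cases hx : x ∈ K
      · exact HasDerivAt.fun_sum fun j _ =>
          (hasDerivAt_line' i (hdu j _ (hrΩ (hmem x hx h hh)))).const_mul _
      · simpa [hpg0 _ x hx] using hasDerivAt_const h (0 : ℝ))
  have hconst : HasDerivAt (fun h : ℝ => ∫ x, ∑ j, pd j g x * pd j u (x + h • e)) 0 0 := by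
    refine (hasDerivAt_const (0 : ℝ) (∫ x, g x)).congr_of_eventuallyEq ?_
    filter_upwards [ball_mem_nhds (0 : ℝ) hr] with h hh using (key h hh).2
  have := hD.2.unique hconst
  simpa using this

end Weak

/-! ### Cutoff functions -/

/-- A smooth monotone cutoff on `ℝ`, equal to `0` on `(-∞, ε]` and to `1` on `[2ε, ∞)`. -/
def cut (ε s : ℝ) : ℝ := Real.smoothTransition (s / ε - 1)

/-- The primitive of `cut ε`; a smooth substitute for the positive part of `s - ε`. -/
def cutInt (ε s : ℝ) : ℝ := ∫ t in (0 : ℝ)..s, cut ε t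

section Cutoff

variable {ε s : ℝ}

lemma contDiff_cut {m : ℕ∞} : ContDiff ℝ m (cut ε) :=
  Real.smoothTransition.contDiff.comp (by fun_prop)

lemma continuous_cut : Continuous (cut ε) := (contDiff_cut (m := 0)).continuous

lemma hasDerivAt_cut (s : ℝ) : HasDerivAt (cut ε) (deriv (cut ε) s) s :=
  ((contDiff_cut (m := 1)).differentiable (by norm_num) s).hasDerivAt

lemma cut_nonneg (s : ℝ) : 0 ≤ cut ε s := Real.smoothTransition.nonneg _

lemma cut_le_one (s : ℝ) : cut ε s ≤ 1 := Real.smoothTransition.le_one _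

lemma cut_eq_zero (hε : 0 < ε) (hs : s ≤ ε) : cut ε s = 0 :=
  Real.smoothTransition.zero_of_nonpos (by rw [sub_nonpos, div_le_one hε]; exact hs)

lemma cut_pos (hε : 0 < ε) (hs : ε < s) : 0 < cut ε s :=
  Real.smoothTransition.pos_of_pos (by rw [sub_pos, one_lt_div hε]; exact hs)

lemma cut_mono (hε : 0 < ε) : Monotone (cut ε) := fun a b hab =>
  Real.smoothTransition.monotone (by gcongr)

lemma cut_anti {ε' : ℝ} (hε' : 0 < ε') (h : ε' ≤ ε) (hs : 0 ≤ s) : cut ε s ≤ cut ε' s :=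
  Real.smoothTransition.monotone (by gcongr)

lemma deriv_cut_nonneg (hε : 0 < ε) (s : ℝ) : 0 ≤ deriv (cut ε) s := (cut_mono hε).deriv_nonneg

lemma deriv_cut_eq_zero (hε : 0 < ε) (hs : s < ε) : deriv (cut ε) s = 0 := by
  have : cut ε =ᶠ[𝓝 s] fun _ => 0 := by
    filter_upwards [Iio_mem_nhds hs] with t ht using cut_eq_zero hε (le_of_lt ht)
  rw [this.deriv_eq, deriv_const]

lemma deriv_cut_eq_zero' (hε : 0 < ε) (hs : 2 * ε < s) : deriv (cut ε) s = 0 := by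
  have : cut ε =ᶠ[𝓝 s] fun _ => 1 := by
    filter_upwards [Ioi_mem_nhds hs] with t ht
    refine Real.smoothTransition.one_of_one_le ?_
    rw [le_sub_iff_add_le, le_div_iff₀ hε]
    have : 2 * ε < t := ht
    linarith
  rw [this.deriv_eq, deriv_const]

lemma hasDerivAt_cutInt (s : ℝ) : HasDerivAt (cutInt ε) (cut ε s) s :=
  intervalIntegral.integral_hasDerivAt_right (continuous_cut.intervalIntegrable _ _)
    (continuous_cut.stronglyMeasurableAtFilter _ _) continuous_cut.continuousAt

lemma contDiff_cutInt : ContDiff ℝ 1 (cutInt ε) := by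
  rw [contDiff_one_iff_deriv]
  refine ⟨fun s => (hasDerivAt_cutInt s).differentiableAt, ?_⟩
  rw [show deriv (cutInt ε) = cut ε from funext fun s => (hasDerivAt_cutInt s).deriv]
  exact continuous_cut

lemma cutInt_mono : Monotone (cutInt ε) :=
  monotone_of_deriv_nonneg (fun s => (hasDerivAt_cutInt s).differentiableAt)
    fun s => (hasDerivAt_cutInt s).deriv ▸ cut_nonneg s

lemma cutInt_eq_zero (hε : 0 < ε) (hs : s ≤ ε) : cutInt ε s = 0 := by
  rw [cutInt, intervalIntegral.integral_congr (g := fun _ => (0 : ℝ)), intervalIntegral.integral_zero]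
  intro t ht
  refine cut_eq_zero hε ?_
  rcases le_total 0 s with h | h
  · rw [uIcc_of_le h] at ht
    exact ht.2.trans hs
  · rw [uIcc_of_ge h] at ht
    exact ht.2.trans hε.le

lemma cutInt_pos (hε : 0 < ε) (hs : ε < s) : 0 < cutInt ε s := by
  have hm : StrictMonoOn (cutInt ε) (Ici ε) := by
    refine strictMonoOn_of_deriv_pos (convex_Ici _) contDiff_cutInt.continuous.continuousOn ?_
    intro t ht
    rw [interior_Ici] at ht
    rw [(hasDerivAt_cutInt t).deriv]
    exact cut_pos hε ht
  rw [← cutInt_eq_zero hε le_rfl]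
  exact hm self_mem_Ici hs.le hs

lemma cutInt_nonneg (hε : 0 < ε) (s : ℝ) : 0 ≤ cutInt ε s := by
  rcases le_or_gt s ε with h | h
  · rw [cutInt_eq_zero hε h]
  · exact (cutInt_pos hε h).le

lemma cutInt_anti {ε' : ℝ} (hε' : 0 < ε') (h : ε' ≤ ε) (hs : 0 ≤ s) :
    cutInt ε s ≤ cutInt ε' s :=
  intervalIntegral.integral_mono_on hs (continuous_cut.intervalIntegrable _ _)
    (continuous_cut.intervalIntegrable _ _) fun _ ht => cut_anti hε' h ht.1

end Cutoff

/-! ### Pointwise divergence identities -/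

/-- `|∇u|²`. -/
def gradSq {n : ℕ} (u : EuclideanSpace ℝ (Fin n) → ℝ) (x : EuclideanSpace ℝ (Fin n)) : ℝ :=
  ∑ i, pd i u x ^ 2

/-- `x · ∇u`. -/
def radial {n : ℕ} (u : EuclideanSpace ℝ (Fin n) → ℝ) (x : EuclideanSpace ℝ (Fin n)) : ℝ :=
  ∑ i, x i * pd i u x

/-- `D²u(∇u, ∇u)`. -/
def hessGrad {n : ℕ} (u : EuclideanSpace ℝ (Fin n) → ℝ) (x : EuclideanSpace ℝ (Fin n)) : ℝ :=
  ∑ i, ∑ j, pd i u x * pd j u x * pd j (pd i u) x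

/-- `|D²u|²`, the squared Hilbert-Schmidt norm of the Hessian. -/
def hessSq {n : ℕ} (u : EuclideanSpace ℝ (Fin n) → ℝ) (x : EuclideanSpace ℝ (Fin n)) : ℝ :=
  ∑ i, ∑ j, pd j (pd i u) x ^ 2

/-- The `j`-th component of the vector field
`½ (|∇u|² + 2u/n - c²) ∇u + (1/n) ((x·∇u) ∇u - ½ (|∇u|² + c²) x + u x + (n - 1) u ∇u)`.
The second summand is the Pohozaev field; if `-Δu = 1` the divergence of the sum is
`D²u(∇u, ∇u) + |∇u|²/n`, and its product with `∇u` vanishes where `u = 0` and `|∇u| = |c|`. -/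
def serrinField {n : ℕ} (c : ℝ) (u : EuclideanSpace ℝ (Fin n) → ℝ) (j : Fin n)
    (x : EuclideanSpace ℝ (Fin n)) : ℝ :=
  (gradSq u x + 2 * u x / n - c ^ 2) / 2 * pd j u x +
    (radial u x * pd j u x - (gradSq u x + c ^ 2) / 2 * x j + u x * x j
      + (n - 1) * (u x * pd j u x)) / n

section Identities

variable {n : ℕ} {Ω K : Set (EuclideanSpace ℝ (Fin n))} {u : EuclideanSpace ℝ (Fin n) → ℝ}

lemma contDiffOn_serrinField (hΩ : IsOpen Ω) (hu : ContDiffOn ℝ 2 u Ω) (c : ℝ) (j : Fin n) :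
    ContDiffOn ℝ 1 (serrinField c u j) Ω := by
  have hpu : ∀ j, ContDiffOn ℝ 1 (pd j u) Ω := fun j => contDiffOn_pd hΩ hu (by norm_num) j
  have hu1 : ContDiffOn ℝ 1 u Ω := hu.of_le (by norm_num)
  have hx : ∀ j : Fin n, ContDiffOn ℝ 1 (fun x : EuclideanSpace ℝ (Fin n) => x j) Ω :=
    fun j => by fun_prop
  have hS : ContDiffOn ℝ 1 (gradSq u) Ω := ContDiffOn.sum fun i _ => (hpu i).pow 2
  have hX : ContDiffOn ℝ 1 (radial u) Ω := ContDiffOn.sum fun i _ => (hx i).mul (hpu i)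
  unfold serrinField
  have := hpu j
  have := hx j
  fun_prop

lemma sum_serrinField (c : ℝ) (x : EuclideanSpace ℝ (Fin n)) :
    ∑ j, pd j u x * serrinField c u j x =
      (gradSq u x + 2 * u x / n - c ^ 2) / 2 * gradSq u x +
        (radial u x * ((gradSq u x - c ^ 2) / 2 + u x) + (n - 1) * (u x * gradSq u x)) / n := by
  have h : ∀ j, pd j u x * serrinField c u j x =
      ((gradSq u x + 2 * u x / n - c ^ 2) / 2 + (radial u x + (n - 1) * u x) / n) * pd j u x ^ 2
        + (u x - (gradSq u x + c ^ 2) / 2) / n * (x j * pd j u x) := by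
    intro j
    rw [serrinField]; ring
  rw [Finset.sum_congr rfl fun j _ => h j, Finset.sum_add_distrib, ← Finset.mul_sum,
    ← Finset.mul_sum, ← gradSq, ← radial]
  ring

lemma sum_pd_serrinField (hn : 0 < n) (hΩ : IsOpen Ω) (hu : ContDiffOn ℝ 2 u Ω) (c : ℝ)
    (hlap : ∀ x ∈ Ω, ∑ j, pd j (pd j u) x = -1) {x : EuclideanSpace ℝ (Fin n)} (hx : x ∈ Ω) :
    ∑ j, pd j (serrinField c u j) x = hessGrad u x + gradSq u x / n := by
  have hn' : (n : ℝ) ≠ 0 := by positivity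
  have hdu : DifferentiableAt ℝ u x :=
    (hu.contDiffAt (hΩ.mem_nhds hx)).differentiableAt (by norm_num)
  have hdpu : ∀ j, DifferentiableAt ℝ (pd j u) x := fun j =>
    ((contDiffOn_pd (m := 1) hΩ hu (by norm_num) j).contDiffAt
      (hΩ.mem_nhds hx)).differentiableAt (by norm_num)
  set G : Fin n → ℝ := fun j => ∑ i, pd i u x * pd j (pd i u) x with hG
  set H : Fin n → ℝ := fun j => ∑ i, x i * pd j (pd i u) x with hH
  have h : ∀ j, pd j (serrinField c u j) x =
      (G j + pd j u x / n) * pd j u x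
        + (gradSq u x + 2 * u x / n - c ^ 2) / 2 * pd j (pd j u) x
        + ((pd j u x + H j) * pd j u x + radial u x * pd j (pd j u) x
          - (G j * x j + (gradSq u x + c ^ 2) / 2) + (pd j u x * x j + u x)
          + (n - 1) * (pd j u x ^ 2 + u x * pd j (pd j u) x)) / n := by
    intro j
    have hd : DifferentiableAt ℝ (serrinField c u j) x :=
      ((contDiffOn_serrinField hΩ hu c j).contDiffAt (hΩ.mem_nhds hx)).differentiableAt
        (by norm_num)
    have h1 := hasDerivAt_line hdu j
    have h2 := fun i => hasDerivAt_line (hdpu i) j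
    have h3 : ∀ i, HasDerivAt (fun t : ℝ => (x + t • EuclideanSpace.single j (1 : ℝ)) i)
        (if i = j then 1 else 0) 0 := by
      intro i
      simpa using ((hasDerivAt_id (0 : ℝ)).mul_const (if i = j then (1 : ℝ) else 0)).const_add (x i)
    have hS : HasDerivAt (fun t : ℝ => gradSq u (x + t • EuclideanSpace.single j (1 : ℝ)))
        (2 * G j) 0 := by
      have := HasDerivAt.fun_sum (u := Finset.univ) fun i _ => (h2 i).pow 2
      refine this.congr_deriv ?_
      rw [hG, Finset.mul_sum]
      refine Finset.sum_congr rfl fun i _ => ?_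
      simp; ring
    have hX : HasDerivAt (fun t : ℝ => radial u (x + t • EuclideanSpace.single j (1 : ℝ)))
        (pd j u x + H j) 0 := by
      have := HasDerivAt.fun_sum (u := Finset.univ) fun i _ => (h3 i).mul (h2 i)
      refine this.congr_deriv ?_
      simp [hH, Finset.sum_add_distrib]
    refine pd_eq_of_hasDerivAt hd ?_
    have := ((((hS.add ((h1.const_mul 2).div_const (n : ℝ))).sub_const (c ^ 2)).div_const 2).mul
      (h2 j)).add (((((hX.mul (h2 j)).sub (((hS.add_const (c ^ 2)).div_const 2).mul (h3 j))).add
        (h1.mul (h3 j))).add ((h1.mul (h2 j)).const_mul ((n : ℝ) - 1))).div_const (n : ℝ))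
    refine this.congr_deriv ?_
    simp
    ring
  have hQ : ∑ j, G j * pd j u x = hessGrad u x := by
    rw [hessGrad, Finset.sum_comm]
    refine Finset.sum_congr rfl fun j _ => ?_
    rw [hG, Finset.sum_mul]
    exact Finset.sum_congr rfl fun i _ => by ring
  have hGH : ∑ j, H j * pd j u x = ∑ j, G j * x j := by
    simp only [hG, hH, Finset.sum_mul]
    rw [Finset.sum_comm]
    refine Finset.sum_congr rfl fun i _ => Finset.sum_congr rfl fun j _ => ?_
    rw [pd_comm hΩ hu hx]; ring
  have e : ∀ j, pd j (serrinField c u j) x =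
      G j * pd j u x + (H j * pd j u x) / n - (G j * x j) / n
        + (1 / n + 1) * pd j u x ^ 2 + (1 / n) * (x j * pd j u x)
        + ((gradSq u x + 2 * u x / n - c ^ 2) / 2 + radial u x / n + (n - 1) / n * u x)
          * pd j (pd j u) x + (u x - (gradSq u x + c ^ 2) / 2) / n := by
    intro j
    rw [h j]; field_simp; ring
  rw [Finset.sum_congr rfl fun j _ => e j]
  simp only [Finset.sum_add_distrib, Finset.sum_sub_distrib, ← Finset.mul_sum, ← Finset.sum_div]
  rw [hQ, hGH, hlap x hx, ← gradSq, ← radial]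
  simp
  field_simp
  ring

end Identities

/-! ### The integral identity and the Hessian of the solution -/

section Core

variable {n : ℕ} {Ω : Set (EuclideanSpace ℝ (Fin n))} {u : EuclideanSpace ℝ (Fin n) → ℝ}

/-- Cauchy-Schwarz for the trace of the Hessian. -/
lemma one_le_mul_hessSq {x : EuclideanSpace ℝ (Fin n)} (hlap : ∑ j, pd j (pd j u) x = -1) :
    1 ≤ n * hessSq u x := by
  have h1 : (∑ j, pd j (pd j u) x) ^ 2 ≤ n * ∑ j, pd j (pd j u) x ^ 2 := by
    simpa using sq_sum_le_card_mul_sum_sq (s := Finset.univ) (f := fun j => pd j (pd j u) x)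
  have h2 : ∑ j, pd j (pd j u) x ^ 2 ≤ hessSq u x :=
    Finset.sum_le_sum fun i _ => Finset.single_le_sum (f := fun j => pd j (pd i u) x ^ 2)
      (fun j _ => sq_nonneg _) (Finset.mem_univ i)
  rw [hlap] at h1
  have : (n : ℝ) * ∑ j, pd j (pd j u) x ^ 2 ≤ n * hessSq u x := by gcongr
  linarith

/-- The two identities obtained by cutting off near the boundary: the weighted integral of the
Hessian defect is an integral over the layer `{ε ≤ u ≤ 2ε}`, whose mass is controlled by the
second identity. -/
lemma integral_identities (hn : 0 < n) (hΩ : IsOpen Ω) (hb : IsBounded Ω) (huc : Continuous u)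
    (hu : ContDiffOn ℝ 2 u Ω) (h0 : ∀ x ∉ Ω, u x = 0)
    (hlap : ∀ x ∈ Ω, ∑ j, pd j (pd j u) x = -1) (c : ℝ) {ε : ℝ} (hε : 0 < ε) :
    (Continuous (fun x => cutInt ε (u x) * (hessSq u x - 1 / n)) ∧
      HasCompactSupport (fun x => cutInt ε (u x) * (hessSq u x - 1 / n))) ∧
    Integrable (fun x => deriv (cut ε) (u x) * ∑ j, pd j u x * serrinField c u j x) ∧
    Integrable (fun x => deriv (cut ε) (u x) * gradSq u x) ∧
    Integrable (fun x => cut ε (u x)) ∧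
    ∫ x, cutInt ε (u x) * (hessSq u x - 1 / n) =
      ∫ x, deriv (cut ε) (u x) * ∑ j, pd j u x * serrinField c u j x ∧
    ∫ x, deriv (cut ε) (u x) * gradSq u x = ∫ x, cut ε (u x) := by
  set K : Set (EuclideanSpace ℝ (Fin n)) := {x | ε ≤ u x} with hKdef
  have hKΩ : K ⊆ Ω := by
    intro x hx
    by_contra h
    have : ε ≤ u x := hx
    rw [h0 x h] at this
    linarith
  have hK : IsCompact K :=
    isCompact_of_isClosed_isBounded (isClosed_le continuous_const huc) (hb.subset hKΩ)
  have hlt : ∀ x ∉ K, u x < ε := fun x hx => not_le.1 hx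
  have c0 : ∀ x ∉ K, cut ε (u x) = 0 := fun x hx => cut_eq_zero hε (hlt x hx).le
  have ci0 : ∀ x ∉ K, cutInt ε (u x) = 0 := fun x hx => cutInt_eq_zero hε (hlt x hx).le
  have cd0 : ∀ x ∉ K, deriv (cut ε) (u x) = 0 := fun x hx => deriv_cut_eq_zero hε (hlt x hx)
  have hu1 : ContDiffOn ℝ 1 u Ω := hu.of_le (by norm_num)
  have hpu : ∀ j, ContDiffOn ℝ 1 (pd j u) Ω := fun j => contDiffOn_pd hΩ hu (by norm_num) j
  have hppu : ∀ j k, ContinuousOn (pd k (pd j u)) Ω := fun j k =>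
    (contDiffOn_pd (m := 0) hΩ (hpu j) (by norm_num) k).continuousOn
  have hY : ∀ j, ContDiffOn ℝ 1 (serrinField c u j) Ω := contDiffOn_serrinField hΩ hu c
  have hC : ContDiffOn ℝ 1 (fun x => cut ε (u x)) Ω := (contDiff_cut (m := 1)).comp_contDiffOn hu1
  have hCI : ContDiffOn ℝ 1 (fun x => cutInt ε (u x)) Ω := contDiff_cutInt.comp_contDiffOn hu1
  have hCD : ContinuousOn (fun x => deriv (cut ε) (u x)) Ω :=
    (((contDiff_cut (m := 1)).continuous_deriv (by norm_num)).comp huc).continuousOn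
  have hS : ContinuousOn (gradSq u) Ω :=
    continuousOn_finsetSum _ fun i _ => (hpu i).continuousOn.pow 2
  have hHS : ContinuousOn (hessSq u) Ω :=
    continuousOn_finsetSum _ fun i _ => continuousOn_finsetSum _ fun j _ => (hppu i j).pow 2
  have hHG : ContinuousOn (hessGrad u) Ω :=
    continuousOn_finsetSum _ fun i _ => continuousOn_finsetSum _ fun j _ =>
      ((hpu i).continuousOn.mul (hpu j).continuousOn).mul (hppu i j)
  have hSY : ContinuousOn (fun x => ∑ j, pd j u x * serrinField c u j x) Ω :=
    continuousOn_finsetSum _ fun i _ => (hpu i).continuousOn.mul (hY i).continuousOn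
  have hdiff : ∀ {f : EuclideanSpace ℝ (Fin n) → ℝ}, ContDiffOn ℝ 1 f Ω → ∀ x ∈ Ω,
      DifferentiableAt ℝ f x := fun hf x hx =>
    (hf.contDiffAt (hΩ.mem_nhds hx)).differentiableAt (by norm_num)
  have pdC : ∀ j, ∀ x ∈ Ω, pd j (fun x => cut ε (u x)) x = deriv (cut ε) (u x) * pd j u x := by
    intro j x hx
    refine pd_eq_of_hasDerivAt (hdiff hC x hx) ?_
    have h1 : HasDerivAt (cut ε) (deriv (cut ε) (u x))
        (u (x + (0 : ℝ) • EuclideanSpace.single j (1 : ℝ))) := by simpa using hasDerivAt_cut (u x)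
    exact HasDerivAt.comp (h₂ := cut ε) (0 : ℝ) h1 (hasDerivAt_line (hdiff hu1 x hx) j)
  have pdCI : ∀ j, ∀ x ∈ Ω, pd j (fun x => cutInt ε (u x)) x = cut ε (u x) * pd j u x := by
    intro j x hx
    refine pd_eq_of_hasDerivAt (hdiff hCI x hx) ?_
    have h1 : HasDerivAt (cutInt ε) (cut ε (u x))
        (u (x + (0 : ℝ) • EuclideanSpace.single j (1 : ℝ))) := by
      simpa using hasDerivAt_cutInt (u x)
    exact h1.comp (0 : ℝ) (hasDerivAt_line (hdiff hu1 x hx) j)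
  have pdmul : ∀ {f g : EuclideanSpace ℝ (Fin n) → ℝ}, ContDiffOn ℝ 1 f Ω → ContDiffOn ℝ 1 g Ω →
      ∀ j, ∀ x ∈ Ω, pd j (fun x => f x * g x) x = pd j f x * g x + f x * pd j g x := by
    intro f g hf hg j x hx
    refine pd_eq_of_hasDerivAt ((hdiff hf x hx).mul (hdiff hg x hx)) ?_
    simpa using! (hasDerivAt_line (hdiff hf x hx) j).mul (hasDerivAt_line (hdiff hg x hx) j)
  have iA := integrable_of_support hΩ hK hKΩ
    (f := fun x => cutInt ε (u x) * (hessSq u x - 1 / n))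
    (hCI.continuousOn.mul (hHS.sub continuousOn_const)) (fun x hx => by rw [ci0 x hx, zero_mul])
  have iB := integrable_of_support hΩ hK hKΩ
    (f := fun x => deriv (cut ε) (u x) * ∑ j, pd j u x * serrinField c u j x)
    (hCD.mul hSY) (fun x hx => by rw [cd0 x hx, zero_mul])
  have iC := integrable_of_support hΩ hK hKΩ
    (f := fun x => deriv (cut ε) (u x) * gradSq u x)
    (hCD.mul hS) (fun x hx => by rw [cd0 x hx, zero_mul])
  have iD := integrable_of_support hΩ hK hKΩ (f := fun x => cut ε (u x)) hC.continuousOn c0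
  have iE := integrable_of_support hΩ hK hKΩ (f := fun x => cut ε (u x) * hessGrad u x)
    (hC.continuousOn.mul hHG) (fun x hx => by rw [c0 x hx, zero_mul])
  have iF := integrable_of_support hΩ hK hKΩ (f := fun x => cutInt ε (u x) * hessSq u x)
    (hCI.continuousOn.mul hHS) (fun x hx => by rw [ci0 x hx, zero_mul])
  have iG := integrable_of_support hΩ hK hKΩ (f := fun x => cutInt ε (u x) / n)
    (hCI.continuousOn.div_const _) (fun x hx => by rw [ci0 x hx, zero_div])
  refine ⟨⟨iA.1, HasCompactSupport.intro hK fun x hx => by rw [ci0 x hx, zero_mul]⟩,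
    iB.2, iC.2, iD.2, ?_, ?_⟩
  · -- test the weak harmonicity of `∂ᵢu` against `cutInt ε (u) ∂ᵢu` and sum over `i`
    have hW : ∫ x, (cutInt ε (u x) * hessSq u x + cut ε (u x) * hessGrad u x) = 0 := by
      have hi : ∀ i, Integrable (fun x => ∑ j, pd j (fun y => cutInt ε (u y) * pd i u y) x *
          pd i (pd j u) x) ∧ ∫ x, ∑ j, pd j (fun y => cutInt ε (u y) * pd i u y) x *
          pd i (pd j u) x = 0 := by
        intro i
        have hz : ∀ x ∉ K, cutInt ε (u x) * pd i u x = 0 := fun x hx => by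
          rw [ci0 x hx, zero_mul]
        refine ⟨(integrable_of_support hΩ hK hKΩ ?_ ?_).2,
          integral_pd_mul_pd_pd hΩ hK hKΩ hu hlap (hCI.mul (hpu i)) hz i⟩
        · exact continuousOn_finsetSum _ fun j _ =>
            (contDiffOn_pd (m := 0) hΩ (hCI.mul (hpu i)) (by norm_num) j).continuousOn.mul
              (hppu j i)
        · intro x hx
          exact Finset.sum_eq_zero fun j _ => by
            rw [pd_eq_zero_of_support hK hz j hx, zero_mul]
      have hsum := integral_finsetSum Finset.univ fun i _ => (hi i).1
      rw [Finset.sum_eq_zero fun i _ => (hi i).2] at hsum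
      rw [← hsum]
      congr 1
      ext x
      by_cases hx : x ∈ K
      · have hxΩ := hKΩ hx
        have : ∀ i j, pd j (fun y => cutInt ε (u y) * pd i u y) x * pd i (pd j u) x =
            cutInt ε (u x) * pd j (pd i u) x ^ 2 +
              cut ε (u x) * (pd i u x * pd j u x * pd j (pd i u) x) := by
          intro i j
          rw [pdmul hCI (hpu i) j x hxΩ, pdCI j x hxΩ, pd_comm hΩ hu hxΩ j i]
          ring
        simp only [this, Finset.sum_add_distrib, ← Finset.mul_sum]
        rfl
      · rw [ci0 x hx, c0 x hx]
        simp only [zero_mul, add_zero]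
        refine (Finset.sum_eq_zero fun i _ => Finset.sum_eq_zero fun j _ => ?_).symm
        rw [pd_eq_zero_of_support hK (fun x hx => by rw [ci0 x hx, zero_mul]) j hx, zero_mul]
    have hZ : ∫ x, (deriv (cut ε) (u x) * ∑ j, pd j u x * serrinField c u j x
        + cut ε (u x) * hessGrad u x + cutInt ε (u x) / n) = 0 := by
      refine integral_div_eq_zero (K := K) (V := fun j x => cut ε (u x) * serrinField c u j x +
        cutInt ε (u x) * ((-1 / n) * pd j u x)) hΩ hK hKΩ
        (fun j => (hC.mul (hY j)).add (hCI.mul (contDiffOn_const.mul (hpu j))))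
        (fun j x hx => by simp [ci0 x hx, c0 x hx]) ?_
        (fun x hx => by simp [ci0 x hx, c0 x hx, cd0 x hx])
      intro x hx
      have hxΩ := hKΩ hx
      have : ∀ j, pd j (fun x => cut ε (u x) * serrinField c u j x +
          cutInt ε (u x) * ((-1 / n) * pd j u x)) x =
          deriv (cut ε) (u x) * (pd j u x * serrinField c u j x) +
            cut ε (u x) * pd j (serrinField c u j) x - cut ε (u x) / n * pd j u x ^ 2
            + cutInt ε (u x) * (-1 / n) * pd j (pd j u) x := by
        intro j
        refine pd_eq_of_hasDerivAt (hdiff ((hC.mul (hY j)).add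
          (hCI.mul (contDiffOn_const.mul (hpu j)))) x hxΩ) ?_
        have := ((hasDerivAt_line (hdiff hC x hxΩ) j).mul
          (hasDerivAt_line (hdiff (hY j) x hxΩ) j)).add
          ((hasDerivAt_line (hdiff hCI x hxΩ) j).mul
          ((hasDerivAt_line (hdiff (hpu j) x hxΩ) j).const_mul (-1 / (n : ℝ))))
        refine this.congr_deriv ?_
        simp only [zero_smul, add_zero]
        rw [pdC j x hxΩ, pdCI j x hxΩ]
        ring
      simp only [this, Finset.sum_add_distrib, Finset.sum_sub_distrib, ← Finset.mul_sum]
      rw [← gradSq, hlap x hxΩ, sum_pd_serrinField hn hΩ hu c hlap hxΩ]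
      ring
    have e1 : ∫ x, cutInt ε (u x) * (hessSq u x - 1 / n) =
        (∫ x, cutInt ε (u x) * hessSq u x) - ∫ x, cutInt ε (u x) / n := by
      rw [← integral_sub iF.2 iG.2]
      congr 1
      ext x
      ring
    rw [integral_add iF.2 iE.2] at hW
    rw [integral_add (by exact iB.2.add iE.2) iG.2, integral_add iB.2 iE.2] at hZ
    rw [e1]
    linarith
  · rw [← sub_eq_zero, ← integral_sub iC.2 iD.2]
    refine integral_div_eq_zero (K := K) (V := fun j x => cut ε (u x) * pd j u x) hΩ hK hKΩ
      (fun j => hC.mul (hpu j)) (fun j x hx => by rw [c0 x hx, zero_mul]) ?_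
      (fun x hx => by rw [c0 x hx, cd0 x hx]; ring)
    intro x hx
    have hxΩ := hKΩ hx
    have : ∀ j, pd j (fun x => cut ε (u x) * pd j u x) x =
        deriv (cut ε) (u x) * pd j u x ^ 2 + cut ε (u x) * pd j (pd j u) x := by
      intro j
      rw [pdmul hC (hpu j) j x hxΩ, pdC j x hxΩ]
      ring
    simp only [this, Finset.sum_add_distrib, ← Finset.mul_sum]
    rw [← gradSq, hlap x hxΩ]
    ring

/-- Near the boundary, where `u` is small and `|∇u|²` is close to `c² ≠ 0`, the product of `∇u`
with the field is small compared with `|∇u|²`. -/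
lemma serrinField_small (hn : 0 < n) (hb : IsBounded Ω) (hpos : ∀ x ∈ Ω, 0 < u x) {c : ℝ}
    (hc : c ≠ 0)
    (hbd : ∀ δ > 0, ∃ ε > 0, ∀ x ∈ Ω, u x < ε → |gradSq u x - c ^ 2| < δ) {κ : ℝ} (hκ : 0 < κ) :
    ∃ ε > 0, ∀ x ∈ Ω, u x < ε → ∑ j, pd j u x * serrinField c u j x ≤ κ * gradSq u x := by
  obtain ⟨R, hR⟩ := hb.exists_norm_le
  have hc2 : 0 < c ^ 2 := by positivity
  set C : ℝ := R ^ 2 / c ^ 2 + 1 with hC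
  have hC1 : 1 ≤ C := by
    have : 0 ≤ R ^ 2 / c ^ 2 := by positivity
    linarith
  set δ : ℝ := min (c ^ 2 / 2) (κ / (3 + 2 * C)) with hδ
  have hδ0 : 0 < δ := by
    refine lt_min (by positivity) ?_
    have : 0 < 3 + 2 * C := by linarith
    positivity
  obtain ⟨ε, hε, h⟩ := hbd δ hδ0
  refine ⟨min ε δ, lt_min hε hδ0, fun x hx hux => ?_⟩
  have h1 := abs_lt.1 (h x hx (hux.trans_le (min_le_left _ _)))
  have hu0 := hpos x hx
  have huδ : u x < δ := hux.trans_le (min_le_right _ _)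
  have hδc : δ ≤ c ^ 2 / 2 := min_le_left _ _
  have hδκ : δ * (3 + 2 * C) ≤ κ := by
    rw [← le_div_iff₀ (by linarith)]
    exact min_le_right _ _
  set S := gradSq u x with hS
  have hSc : c ^ 2 / 2 ≤ S := by linarith [h1.1]
  have hS0 : 0 < S := by linarith
  have hX : |radial u x| ≤ C * S := by
    have hx2 : ∑ i, x i ^ 2 ≤ R ^ 2 := by
      have := hR x hx
      rw [EuclideanSpace.norm_eq] at this
      have h3 : 0 ≤ ∑ i, ‖x i‖ ^ 2 := Finset.sum_nonneg fun i _ => sq_nonneg _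
      calc ∑ i, x i ^ 2 = ∑ i, ‖x i‖ ^ 2 := by simp
        _ = (√(∑ i, ‖x i‖ ^ 2)) ^ 2 := (Real.sq_sqrt h3).symm
        _ ≤ R ^ 2 := by gcongr
    have h2 : |radial u x| ≤ (∑ i, x i ^ 2 + S) / 2 := by
      refine (Finset.abs_sum_le_sum_abs _ _).trans ?_
      rw [hS, gradSq, ← Finset.sum_add_distrib, Finset.sum_div]
      refine Finset.sum_le_sum fun i _ => ?_
      rw [abs_mul]
      nlinarith [sq_nonneg (|x i| - |pd i u x|), sq_abs (x i), sq_abs (pd i u x)]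
    have h3 : R ^ 2 / 2 ≤ R ^ 2 / c ^ 2 * S := by
      rw [div_mul_eq_mul_div, div_le_div_iff₀ (by norm_num) hc2]
      nlinarith [sq_nonneg R]
    rw [hC]
    linarith
  rw [sum_serrinField, ← hS]
  have hn1 : (1 : ℝ) ≤ n := by exact_mod_cast hn
  have hn0 : (0 : ℝ) < n := by linarith
  have a1 : 2 * u x / n ≤ 2 * δ := by
    rw [div_le_iff₀ hn0]; nlinarith
  have a2 : (S + 2 * u x / n - c ^ 2) / 2 * S ≤ 3 / 2 * δ * S := by
    refine mul_le_mul_of_nonneg_right ?_ hS0.le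
    linarith [h1.2]
  have a3 : radial u x * ((S - c ^ 2) / 2 + u x) ≤ C * S * (3 / 2 * δ) := by
    refine (le_abs_self _).trans ?_
    rw [abs_mul]
    refine mul_le_mul hX ?_ (abs_nonneg _) (by positivity)
    rw [abs_le]
    constructor <;> linarith [h1.1, h1.2]
  have a4 : (radial u x * ((S - c ^ 2) / 2 + u x) + (n - 1) * (u x * S)) / n ≤
      C * S * (3 / 2 * δ) + δ * S := by
    rw [div_le_iff₀ hn0]
    have b1 : C * S * (3 / 2 * δ) ≤ C * S * (3 / 2 * δ) * n :=
      le_mul_of_one_le_right (by positivity) hn1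
    have b2 : (n - 1) * (u x * S) ≤ n * (δ * S) :=
      mul_le_mul (by linarith) (by gcongr) (by positivity) hn0.le
    nlinarith
  have a5 : δ * (3 + 2 * C) * S ≤ κ * S := by gcongr
  have a6 : 0 ≤ δ * S := by positivity
  have a7 : 0 ≤ C * (δ * S) := by positivity
  nlinarith

/-- The Hessian defect `|D²u|² - 1/n` cannot be positive at a point: its integral over a fixed
neighbourhood would be positive, while the two integral identities make it arbitrarily small. -/
theorem hessSq_le (hn : 0 < n) (hΩ : IsOpen Ω) (hb : IsBounded Ω) (huc : Continuous u)
    (hu : ContDiffOn ℝ 2 u Ω) (hpos : ∀ x ∈ Ω, 0 < u x) (h0 : ∀ x ∉ Ω, u x = 0)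
    (hlap : ∀ x ∈ Ω, ∑ j, pd j (pd j u) x = -1) {c : ℝ} (hc : c ≠ 0)
    (hbd : ∀ δ > 0, ∃ ε > 0, ∀ x ∈ Ω, u x < ε → |gradSq u x - c ^ 2| < δ)
    {x : EuclideanSpace ℝ (Fin n)} (hx : x ∈ Ω) : hessSq u x ≤ 1 / n := by
  have hn0 : (0 : ℝ) < n := by exact_mod_cast hn
  have hdef : ∀ y ∈ Ω, 0 ≤ hessSq u y - 1 / n := by
    intro y hy
    rw [sub_nonneg, div_le_iff₀ hn0, mul_comm]
    exact one_le_mul_hessSq (hlap y hy)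
  have hu0 : ∀ y, 0 ≤ u y := fun y => by
    by_cases hy : y ∈ Ω
    · exact (hpos y hy).le
    · exact (h0 y hy).ge
  have hnn : ∀ ε > 0, ∀ y, 0 ≤ cutInt ε (u y) * (hessSq u y - 1 / n) := by
    intro ε hε y
    by_cases hy : y ∈ Ω
    · exact mul_nonneg (cutInt_nonneg hε _) (hdef y hy)
    · rw [h0 y hy, cutInt_eq_zero hε hε.le, zero_mul]
  have hux := hpos x hx
  obtain ⟨ε₁, hε₁, hε₁u⟩ : ∃ ε₁ > 0, ε₁ < u x := ⟨u x / 2, by linarith, by linarith⟩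
  obtain ⟨⟨hcont, hsupp⟩, -⟩ := integral_identities hn hΩ hb huc hu h0 hlap c hε₁
  have hle : ∀ κ > 0, ∫ y, cutInt ε₁ (u y) * (hessSq u y - 1 / n) ≤ κ * volume.real Ω := by
    intro κ hκ
    obtain ⟨ε₀, hε₀, hsm⟩ := serrinField_small hn hb hpos hc hbd hκ
    set ε := min ε₁ (ε₀ / 3) with hεdef
    have hε : 0 < ε := lt_min hε₁ (by linarith)
    have hεε₀ : ε ≤ ε₀ / 3 := min_le_right _ _
    obtain ⟨⟨hcont', hsupp'⟩, iB, iC, iD, e1, e2⟩ :=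
      integral_identities hn hΩ hb huc hu h0 hlap c hε
    calc ∫ y, cutInt ε₁ (u y) * (hessSq u y - 1 / n)
        ≤ ∫ y, cutInt ε (u y) * (hessSq u y - 1 / n) := by
          refine integral_mono (hcont.integrable_of_hasCompactSupport hsupp)
            (hcont'.integrable_of_hasCompactSupport hsupp') fun y => ?_
          by_cases hy : y ∈ Ω
          · exact mul_le_mul_of_nonneg_right (cutInt_anti hε (min_le_left _ _) (hu0 y)) (hdef y hy)
          · simp only [h0 y hy, cutInt_eq_zero hε hε.le, cutInt_eq_zero hε₁ hε₁.le, zero_mul, le_refl]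
      _ = ∫ y, deriv (cut ε) (u y) * ∑ j, pd j u y * serrinField c u j y := e1
      _ ≤ ∫ y, κ * (deriv (cut ε) (u y) * gradSq u y) := by
          refine integral_mono iB (iC.const_mul κ) fun y => ?_
          by_cases hy : y ∈ Ω ∧ u y < ε₀
          · have := mul_le_mul_of_nonneg_left (hsm y hy.1 hy.2) (deriv_cut_nonneg hε (u y))
            simp only
            linarith
          · have : deriv (cut ε) (u y) = 0 := by
              by_cases hyΩ : y ∈ Ω
              · refine deriv_cut_eq_zero' hε ?_
                have : ε₀ ≤ u y := not_lt.1 fun h => hy ⟨hyΩ, h⟩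
                linarith
              · rw [h0 y hyΩ]
                exact deriv_cut_eq_zero hε hε
            simp [this]
      _ = κ * ∫ y, cut ε (u y) := by rw [integral_const_mul, e2]
      _ ≤ κ * volume.real Ω := by
          refine mul_le_mul_of_nonneg_left ?_ hκ.le
          have hfin : volume Ω ≠ ⊤ := hb.measure_lt_top.ne
          calc ∫ y, cut ε (u y) ≤ ∫ y, Ω.indicator (fun _ => (1 : ℝ)) y := by
                refine integral_mono iD ((integrable_indicator_iff hΩ.measurableSet).2
                  (integrableOn_const hfin)) fun y => ?_
                by_cases hy : y ∈ Ω
                · simpa [hy] using cut_le_one (u y)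
                · simp [hy, h0 y hy, cut_eq_zero hε hε.le]
            _ = volume.real Ω := by
                rw [integral_indicator hΩ.measurableSet]
                simp
  have hle0 : ∫ y, cutInt ε₁ (u y) * (hessSq u y - 1 / n) ≤ 0 := by
    refine le_of_forall_pos_le_add fun τ hτ => ?_
    have hV : 0 ≤ volume.real Ω := measureReal_nonneg
    refine (hle (τ / (volume.real Ω + 1)) (by positivity)).trans ?_
    rw [div_mul_eq_mul_div, div_le_iff₀ (by positivity)]
    nlinarith
  by_contra hcon
  have hlt : 0 < hessSq u x - 1 / n := sub_pos.2 (not_le.1 hcon)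
  have := hcont.integral_pos_of_hasCompactSupport_nonneg_nonzero (μ := volume) hsupp
    (hnn ε₁ hε₁) (x := x) (mul_pos (cutInt_pos hε₁ hε₁u) hlt).ne'
  linarith

end Core

/-! ### The minimum principle -/

section MinPrinciple

variable {n : ℕ} {O Ω : Set (EuclideanSpace ℝ (Fin n))} {u v : EuclideanSpace ℝ (Fin n) → ℝ}

lemma pd_pd_nonneg_of_isLocalMin (hO : IsOpen O) (hv : ContDiffOn ℝ 2 v O)
    {x : EuclideanSpace ℝ (Fin n)} (hx : x ∈ O) (hmin : IsLocalMin v x) (i : Fin n) :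
    0 ≤ pd i (pd i v) x := by
  by_contra! hneg
  set e : EuclideanSpace ℝ (Fin n) := EuclideanSpace.single i 1 with he
  set f : ℝ → ℝ := fun t => v (x + t • e) with hf
  have hcont : Continuous fun t : ℝ => x + t • e := by fun_prop
  have hmap : Tendsto (fun t : ℝ => x + t • e) (𝓝 0) (𝓝 x) := by
    simpa using hcont.tendsto 0
  have hderiv : deriv f =ᶠ[𝓝 0] fun t => pd i v (x + t • e) := by
    filter_upwards [hmap.eventually (hO.mem_nhds hx)] with t ht
    exact (hasDerivAt_line' i ((hv.contDiffAt (hO.mem_nhds ht)).differentiableAt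
      (by norm_num))).deriv
  have hpd : DifferentiableAt ℝ (pd i v) x :=
    ((contDiffOn_pd hO hv (m := 1) (by norm_num) i).contDiffAt (hO.mem_nhds hx)).differentiableAt
      (by norm_num)
  have h2 : deriv (deriv f) 0 = pd i (pd i v) x := by
    rw [hderiv.deriv_eq]
    exact (hasDerivAt_line hpd i).deriv
  have hfmin : IsLocalMin f 0 := by
    have := hmap.eventually hmin
    simpa [IsLocalMin, IsMinFilter, hf] using this
  have hfc : ContinuousAt f 0 :=
    (hasDerivAt_line ((hv.contDiffAt (hO.mem_nhds hx)).differentiableAt (by norm_num))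
      i).continuousAt
  have hfmax : IsLocalMax f 0 :=
    isLocalMax_of_deriv_deriv_neg (h2 ▸ hneg) hfmin.deriv_eq_zero hfc
  -- Being both a local minimum and a local maximum, `f` is locally constant.
  have hconst : f =ᶠ[𝓝 0] fun _ => f 0 := by
    filter_upwards [hfmin, hfmax] with t h3 h4 using le_antisymm h4 h3
  have h5 : deriv (deriv f) 0 = 0 := by
    rw [hconst.deriv.deriv_eq]
    simp
  linarith

/-- A strictly superharmonic function that is nonnegative on the boundary of a bounded open set is
positive inside. -/
lemma superharmonic_pos (hΩ : IsOpen Ω) (hb : IsBounded Ω) (hvc : ContinuousOn v (closure Ω))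
    (hv : ContDiffOn ℝ 2 v Ω) (hlap : ∀ x ∈ Ω, ∑ i, pd i (pd i v) x < 0)
    (h0 : ∀ x ∈ frontier Ω, 0 ≤ v x) {x : EuclideanSpace ℝ (Fin n)} (hx : x ∈ Ω) : 0 < v x := by
  have hcpt : IsCompact (closure Ω) := hb.isCompact_closure
  have hno : ∀ y ∈ Ω, ¬ IsMinOn v (closure Ω) y := by
    intro y hy hmin
    have hloc : IsLocalMin v y :=
      hmin.isLocalMin (mem_of_superset (hΩ.mem_nhds hy) subset_closure)
    exact absurd (hlap y hy)
      (not_lt.2 (Finset.sum_nonneg fun i _ => pd_pd_nonneg_of_isLocalMin hΩ hv hy hloc i))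
  obtain ⟨y, hy, hymin⟩ := hcpt.exists_isMinOn ⟨x, subset_closure hx⟩ hvc
  have hyf : y ∈ frontier Ω := by
    rw [hΩ.frontier_eq]
    exact ⟨hy, fun h => hno y h hymin⟩
  by_contra! hneg
  refine hno x hx fun z hz => ?_
  exact hneg.trans ((h0 y hyf).trans (hymin hz))

lemma pd_sqdist (z x : EuclideanSpace ℝ (Fin n)) (i : Fin n) :
    pd i (fun y => ‖y - z‖ ^ 2) x = 2 * (x i - z i) := by
  have h : HasFDerivAt (fun y => ‖y - z‖ ^ 2) _ x := ((hasFDerivAt_id x).sub_const z).norm_sq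
  rw [pd, h.fderiv]
  simp [EuclideanSpace.inner_single_right]

lemma pd_coord (x : EuclideanSpace ℝ (Fin n)) (i j : Fin n) :
    pd j (fun y : EuclideanSpace ℝ (Fin n) => y i) x = if i = j then 1 else 0 := by
  have h : HasFDerivAt (fun y : EuclideanSpace ℝ (Fin n) => y i)
      (EuclideanSpace.proj i : EuclideanSpace ℝ (Fin n) →L[ℝ] ℝ) x :=
    (EuclideanSpace.proj i : EuclideanSpace ℝ (Fin n) →L[ℝ] ℝ).hasFDerivAt
  rw [pd, h.fderiv]
  simp

lemma contDiff_sqdist (z : EuclideanSpace ℝ (Fin n)) {k : WithTop ℕ∞} :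
    ContDiff ℝ k (fun y : EuclideanSpace ℝ (Fin n) => ‖y - z‖ ^ 2) :=
  (contDiff_id.sub contDiff_const).norm_sq ℝ

lemma pd_add_const_mul (hΩ : IsOpen Ω) (hu : ContDiffOn ℝ 1 u Ω) (hv : ContDiff ℝ 1 v) (a : ℝ)
    {x : EuclideanSpace ℝ (Fin n)} (hx : x ∈ Ω) (i : Fin n) :
    pd i (fun y => u y + a * v y) x = pd i u x + a * pd i v x := by
  have h1 := ((hu.contDiffAt (hΩ.mem_nhds hx)).differentiableAt (by norm_num)).hasFDerivAt
  have h2 := ((hv.differentiable (by norm_num)) x).hasFDerivAt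
  have : HasFDerivAt (fun y => u y + a * v y) _ x := h1.add (h2.const_mul a)
  rw [pd, this.fderiv]
  simp [pd]

lemma pd_pd_add_sqdist (hΩ : IsOpen Ω) (hu : ContDiffOn ℝ 2 u Ω) (a : ℝ)
    (z : EuclideanSpace ℝ (Fin n)) {x : EuclideanSpace ℝ (Fin n)} (hx : x ∈ Ω) (i : Fin n) :
    pd i (pd i (fun y => u y + a * ‖y - z‖ ^ 2)) x = pd i (pd i u) x + 2 * a := by
  have h1 : pd i (fun y => u y + a * ‖y - z‖ ^ 2) =ᶠ[𝓝 x]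
      fun y => pd i u y + (2 * a) * (y i - z i) := by
    filter_upwards [hΩ.mem_nhds hx] with y hy
    rw [pd_add_const_mul hΩ (hu.of_le (by norm_num)) (contDiff_sqdist z) a hy, pd_sqdist]
    ring
  have hproj : ContDiff ℝ 1 fun y : EuclideanSpace ℝ (Fin n) => y i - z i :=
    (EuclideanSpace.proj i : EuclideanSpace ℝ (Fin n) →L[ℝ] ℝ).contDiff.sub contDiff_const
  rw [pd_congr h1, pd_add_const_mul hΩ (contDiffOn_pd hΩ hu (by norm_num) i) hproj _ hx]
  have : pd i (fun y : EuclideanSpace ℝ (Fin n) => y i - z i) x = 1 := by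
    have := pd_coord x i i
    rw [pd, fderiv_sub_const, ← pd, this, if_pos rfl]
  rw [this, mul_one]

end MinPrinciple
/-! ### Boundary behaviour -/

section Boundary

variable {n : ℕ} {Ω : Set (EuclideanSpace ℝ (Fin n))}
  {ν : EuclideanSpace ℝ (Fin n) → EuclideanSpace ℝ (Fin n)} {u : EuclideanSpace ℝ (Fin n) → ℝ}

/-- Directions pointing into a sublevel set belong to its tangent cone. -/
lemma mem_tangentConeAt_of_sublevel {U : Set (EuclideanSpace ℝ (Fin n))}
    {φ : EuclideanSpace ℝ (Fin n) → ℝ} {x v : EuclideanSpace ℝ (Fin n)} (hU : IsOpen U)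
    (hxU : x ∈ U) (hφ : DifferentiableAt ℝ φ x) (hφx : φ x = 0)
    (hsub : ∀ y ∈ U, φ y < 0 → y ∈ Ω) (hv : fderiv ℝ φ x v < 0) :
    v ∈ tangentConeAt ℝ (closure Ω) x := by
  have hd : HasDerivAt (fun t : ℝ => φ (x + t • v)) (fderiv ℝ φ x v) 0 :=
    hφ.hasFDerivAt.hasLineDerivAt v
  have hmap : Tendsto (fun t : ℝ => x + t • v) (𝓝[>] 0) (𝓝 x) := by
    have hcont : Continuous fun t : ℝ => x + t • v := by fun_prop
    have := hcont.tendsto 0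
    simp only [zero_smul, add_zero] at this
    exact this.mono_left nhdsWithin_le_nhds
  refine mem_tangentConeAt_of_add_smul_mem (l := 𝓝[>] (0 : ℝ)) (c := id)
    (tendsto_id'.2 (nhdsGT_le_nhdsNE _)) ?_
  have hslope : ∀ᶠ t in 𝓝[>] (0 : ℝ), slope (fun t : ℝ => φ (x + t • v)) 0 t < 0 :=
    ((hasDerivAt_iff_tendsto_slope.1 hd).mono_left (nhdsGT_le_nhdsNE _)).eventually
      (gt_mem_nhds hv)
  filter_upwards [hslope, hmap.eventually (hU.mem_nhds hxU), self_mem_nhdsWithin] with t h1 h2 h3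
  refine subset_closure (hsub _ h2 ?_)
  rw [slope_def_field] at h1
  simp only [zero_smul, add_zero, hφx, sub_zero] at h1
  have h3' : (0 : ℝ) < t := h3
  by_contra! h4
  exact absurd h1 (not_lt.2 (div_nonneg h4 h3'.le))

lemma uniqueDiffOn_closure (hΩ : IsOpen Ω) (hbd : IsC2DomainWithInnerNormal Ω ν) :
    UniqueDiffOn ℝ (closure Ω) := by
  intro x hx
  by_cases hxΩ : x ∈ Ω
  · exact uniqueDiffWithinAt_of_mem_nhds (mem_of_superset (hΩ.mem_nhds hxΩ) subset_closure)
  have hxf : x ∈ frontier Ω := by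
    rw [hΩ.frontier_eq]
    exact ⟨hx, hxΩ⟩
  obtain ⟨U, φ, hU, hxU, hφ, hgrad, hin, hfr, -⟩ := hbd x hxf
  have hφd : DifferentiableAt ℝ φ x :=
    (hφ.contDiffAt (hU.mem_nhds hxU)).differentiableAt (by norm_num)
  have hφx : φ x = 0 := by
    have : x ∈ {y ∈ U | φ y = 0} := hfr ▸ ⟨hxf, hxU⟩
    exact this.2
  have hsub : ∀ y ∈ U, φ y < 0 → y ∈ Ω := fun y hy h => by
    have : y ∈ Ω ∩ U := hin ▸ ⟨hy, h⟩
    exact this.1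
  set V : Set (EuclideanSpace ℝ (Fin n)) := {v | fderiv ℝ φ x v < 0} with hV
  have hVo : IsOpen V := isOpen_lt (fderiv ℝ φ x).continuous continuous_const
  have hVne : (-gradient φ x) ∈ V := by
    have h1 : fderiv ℝ φ x (gradient φ x) = ‖gradient φ x‖ ^ 2 := by
      rw [← inner_gradient_left, real_inner_self_eq_norm_sq]
    have h2 : 0 < ‖gradient φ x‖ := norm_pos_iff.2 (hgrad x hxU)
    simp only [hV, mem_ofPred_eq, map_neg, h1]
    have := pow_pos h2 2
    linarith
  have hspan : Submodule.span ℝ (tangentConeAt ℝ (closure Ω) x) = ⊤ := by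
    refine Submodule.eq_top_of_nonempty_interior' _ ⟨-gradient φ x, ?_⟩
    refine mem_interior.2 ⟨V, fun v hv => Submodule.subset_span ?_, hVo, hVne⟩
    exact mem_tangentConeAt_of_sublevel hU hxU hφd hφx hsub hv
  exact ⟨by rw [hspan]; exact dense_univ, subset_closure.trans (by simp) hx⟩

/-- Since `u` vanishes on the level set `{φ = 0}`, its derivative vanishes in tangential
directions: the implicit function theorem gives a curve in the boundary with any prescribed
tangential velocity. -/
lemma fderivWithin_tangential {s : Set (EuclideanSpace ℝ (Fin n))}
    {φ : EuclideanSpace ℝ (Fin n) → ℝ} {x v : EuclideanSpace ℝ (Fin n)}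
    (hφ : ContDiffAt ℝ 2 φ x) (hgrad : gradient φ x ≠ 0) (hu : DifferentiableWithinAt ℝ u s x)
    (h0 : ∀ᶠ y in 𝓝 x, φ y = φ x → y ∈ s ∧ u y = 0)
    (hv : fderiv ℝ φ x v = 0) : fderivWithin ℝ u s x v = 0 := by
  have hf : HasStrictFDerivAt φ (fderiv ℝ φ x) x := hφ.hasStrictFDerivAt (by norm_num)
  have hφd : DifferentiableAt ℝ φ x := hφ.differentiableAt (by norm_num)
  have hne : fderiv ℝ φ x ≠ 0 := by
    intro h
    apply hgrad
    simp [gradient, h]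
  have hf' : (fderiv ℝ φ x).range = ⊤ := by
    refine LinearMap.range_eq_top.2 (LinearMap.surjective ?_)
    intro h
    exact hne (ContinuousLinearMap.coe_injective h)
  set g := hf.implicitFunction φ (fderiv ℝ φ x) hf' (φ x) with hg
  have hgd := hf.to_implicitFunction hf'
  set w : (fderiv ℝ φ x).ker := ⟨v, hv⟩ with hw
  have hg0 : g 0 = x := hf.implicitFunction_apply_image hf'
  have hγ : HasDerivAt (fun t : ℝ => g (t • w)) v 0 := by
    have h1 : HasDerivAt (fun t : ℝ => t • w) w 0 := by
      simpa using (hasDerivAt_id (0 : ℝ)).smul_const w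
    have h2 : HasFDerivAt g (fderiv ℝ φ x).ker.subtypeL ((0 : ℝ) • w) := by
      rw [zero_smul]
      exact hgd.hasFDerivAt
    exact h2.comp_hasDerivAt 0 h1
  have hγ0 : g ((0 : ℝ) • w) = x := by rw [zero_smul, hg0]
  have hlevel : ∀ᶠ t in 𝓝 (0 : ℝ), φ (g (t • w)) = φ x := by
    have h1 := hf.map_implicitFunction_eq hf'
    have h2 : Tendsto (fun t : ℝ => (φ x, t • w)) (𝓝 0) (𝓝 (φ x, 0)) := by
      have : Continuous (fun t : ℝ => (φ x, t • w)) := by fun_prop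
      simpa using this.tendsto 0
    exact h2.eventually h1
  have htend : Tendsto (fun t : ℝ => g (t • w)) (𝓝 0) (𝓝 x) := by
    have := hγ.continuousAt.tendsto
    rwa [hγ0] at this
  have hev : ∀ᶠ t in 𝓝 (0 : ℝ), g (t • w) ∈ s ∧ u (g (t • w)) = 0 := by
    filter_upwards [hlevel, htend.eventually h0] with t h1 h2 using h2 h1
  have hL : HasFDerivWithinAt u (fderivWithin ℝ u s x) s (g ((0 : ℝ) • w)) := by
    rw [hγ0]
    exact hu.hasFDerivWithinAt
  set T : Set ℝ := {t | g (t • w) ∈ s} with hT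
  have hTn : T ∈ 𝓝 (0 : ℝ) := hev.mono fun t h => h.1
  have hcomp : HasDerivWithinAt (fun t : ℝ => u (g (t • w))) (fderivWithin ℝ u s x v) T 0 :=
    hL.comp_hasDerivWithinAt 0 hγ.hasDerivWithinAt fun t ht => ht
  have hzero : HasDerivAt (fun t : ℝ => u (g (t • w))) 0 0 :=
    (hasDerivAt_const (0 : ℝ) (0 : ℝ)).congr_of_eventuallyEq (hev.mono fun t h => h.2)
  exact (hcomp.hasDerivAt hTn).unique hzero

/-- On the boundary `∇u = c ν`, so `|∇u|² = c²`. -/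
lemma sum_sq_fderivWithin_frontier (hbd : IsC2DomainWithInnerNormal Ω ν)
    (hu : ContDiffOn ℝ 2 u (closure Ω)) (hdir : ∀ x ∈ frontier Ω, u x = 0)
    {x : EuclideanSpace ℝ (Fin n)} (hx : x ∈ frontier Ω) :
    ∑ i, fderivWithin ℝ u (closure Ω) x (EuclideanSpace.single i 1) ^ 2 =
      fderivWithin ℝ u (closure Ω) x (ν x) ^ 2 := by
  obtain ⟨U, φ, hU, hxU, hφ, hgrad, -, hfr, hν⟩ := hbd x hx
  have hφx : φ x = 0 := by
    have : x ∈ {y ∈ U | φ y = 0} := hfr ▸ ⟨hx, hxU⟩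
    exact this.2
  have hclos : frontier Ω ⊆ closure Ω := frontier_subset_closure
  set L := fderivWithin ℝ u (closure Ω) x with hL
  have htan : ∀ v, fderiv ℝ φ x v = 0 → L v = 0 := by
    intro v hv
    refine fderivWithin_tangential (hφ.contDiffAt (hU.mem_nhds hxU)) (hgrad x hxU)
      (hu.differentiableOn (by norm_num) x (hclos hx)) ?_ hv
    filter_upwards [hU.mem_nhds hxU] with y hy hφy
    have : y ∈ frontier Ω ∩ U := hfr ▸ ⟨hy, hφy.trans hφx⟩
    exact ⟨hclos this.1, hdir y this.1⟩
  have hpos : 0 < ‖gradient φ x‖ := norm_pos_iff.2 (hgrad x hxU)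
  have hνx := hν x ⟨hx, hxU⟩
  have hν1 : ‖ν x‖ = 1 := by
    rw [hνx, norm_neg, norm_smul, norm_inv, norm_norm, inv_mul_cancel₀ hpos.ne']
  have hdec : ∀ v, L v = ⟪ν x, v⟫ * L (ν x) := by
    intro v
    have h1 : fderiv ℝ φ x (v - ⟪ν x, v⟫ • ν x) = 0 := by
      have h3 : gradient φ x = -(‖gradient φ x‖ • ν x) := by
        rw [hνx, smul_neg, neg_neg, smul_smul, mul_inv_cancel₀ hpos.ne', one_smul]
      rw [← inner_gradient_left, h3, inner_neg_left, real_inner_smul_left, inner_sub_right,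
        real_inner_smul_right, real_inner_self_eq_norm_sq, hν1]
      ring
    have h2 := htan _ h1
    rw [map_sub, map_smul, smul_eq_mul] at h2
    linarith
  have hsum : ∑ i, (ν x i) ^ 2 = 1 := by
    rw [← EuclideanSpace.real_norm_sq_eq, hν1, one_pow]
  calc ∑ i, L (EuclideanSpace.single i 1) ^ 2 = ∑ i, (ν x i) ^ 2 * L (ν x) ^ 2 := by
        refine Finset.sum_congr rfl fun i _ => ?_
        rw [hdec, EuclideanSpace.inner_single_right]
        simp [mul_pow]
    _ = L (ν x) ^ 2 := by rw [← Finset.sum_mul, hsum, one_mul]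

/-- `|∇u|²` extends continuously to the closure with value `c²` on the boundary; by compactness it
is uniformly close to `c²` where `u` is small. -/
lemma gradSq_near_boundary (hΩ : IsOpen Ω) (hb : IsBounded Ω)
    (hbd : IsC2DomainWithInnerNormal Ω ν) (hu : ContDiffOn ℝ 2 u (closure Ω))
    (hdir : ∀ x ∈ frontier Ω, u x = 0) (hpos : ∀ x ∈ Ω, 0 < u x) {c : ℝ}
    (hneu : ∀ x ∈ frontier Ω, fderivWithin ℝ u (closure Ω) x (ν x) = c) (δ : ℝ) (hδ : 0 < δ) :
    ∃ ε > 0, ∀ x ∈ Ω, u x < ε → |gradSq u x - c ^ 2| < δ := by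
  set G : EuclideanSpace ℝ (Fin n) → ℝ := fun x =>
    |∑ i, fderivWithin ℝ u (closure Ω) x (EuclideanSpace.single i 1) ^ 2 - c ^ 2| with hG
  have hGc : ContinuousOn G (closure Ω) := by
    have h1 := hu.continuousOn_fderivWithin (uniqueDiffOn_closure hΩ hbd) (by norm_num)
    exact ((continuousOn_finsetSum _ fun i _ =>
      ((h1.clm_apply continuousOn_const).pow 2)).sub continuousOn_const).abs
  have hGΩ : ∀ x ∈ Ω, G x = |gradSq u x - c ^ 2| := by
    intro x hx
    simp only [hG, gradSq, pd,
      fderivWithin_of_mem_nhds (mem_of_superset (hΩ.mem_nhds hx) subset_closure)]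
  have hGf : ∀ x ∈ frontier Ω, G x = 0 := by
    intro x hx
    simp only [hG]
    rw [sum_sq_fderivWithin_frontier hbd hu hdir hx, hneu x hx, sub_self, abs_zero]
  set K : Set (EuclideanSpace ℝ (Fin n)) := closure Ω ∩ G ⁻¹' Ici δ with hK
  have hKc : IsCompact K :=
    hb.isCompact_closure.of_isClosed_subset
      (hGc.preimage_isClosed_of_isClosed isClosed_closure isClosed_Ici) inter_subset_left
  have hKΩ : K ⊆ Ω := by
    rintro x ⟨hx, hxδ⟩
    by_contra hxΩ
    have hxf : x ∈ frontier Ω := by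
      rw [hΩ.frontier_eq]
      exact ⟨hx, hxΩ⟩
    have : δ ≤ G x := hxδ
    rw [hGf x hxf] at this
    linarith
  rcases K.eq_empty_or_nonempty with hKe | hKne
  · refine ⟨1, one_pos, fun x hx _ => ?_⟩
    by_contra! h
    have : x ∈ K := ⟨subset_closure hx, by rw [mem_preimage, hGΩ x hx]; exact h⟩
    rw [hKe] at this
    exact this
  · obtain ⟨y, hy, hymin⟩ := hKc.exists_isMinOn hKne
      (hu.continuousOn.mono (hKΩ.trans subset_closure))
    refine ⟨u y, hpos y (hKΩ hy), fun x hx hxy => ?_⟩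
    by_contra! h
    have hxK : x ∈ K := ⟨subset_closure hx, by rw [mem_preimage, hGΩ x hx]; exact h⟩
    exact absurd (hymin hxK) (not_le.2 hxy)

/-- Hopf's boundary point lemma at one boundary point, by comparison with the torsion function of an
inscribed ball: the normal derivative does not vanish. -/
lemma normal_deriv_ne_zero (hn : 0 < n) (hΩ : IsOpen Ω) (hb : IsBounded Ω) (hne : Ω.Nonempty)
    (hbd : IsC2DomainWithInnerNormal Ω ν) (hu : ContDiffOn ℝ 2 u (closure Ω))
    (hdir : ∀ x ∈ frontier Ω, u x = 0) (hpos : ∀ x ∈ Ω, 0 < u x)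
    (hlap : ∀ x ∈ Ω, ∑ j, pd j (pd j u) x = -1) {c : ℝ}
    (hneu : ∀ x ∈ frontier Ω, fderivWithin ℝ u (closure Ω) x (ν x) = c) : c ≠ 0 := by
  have : Nonempty (Fin n) := ⟨⟨0, hn⟩⟩
  obtain ⟨z, hz⟩ := hne
  have hcne : (Ωᶜ).Nonempty := by
    by_contra h
    rw [not_nonempty_iff_eq_empty, compl_empty_iff] at h
    exact NormedSpace.unbounded_univ ℝ (EuclideanSpace ℝ (Fin n)) (h ▸ hb)
  obtain ⟨y, hy, hyd⟩ := hΩ.isClosed_compl.exists_infDist_eq_dist hcne z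
  set r := dist z y with hr
  have hr0 : 0 < r := dist_pos.2 fun h => hy (h ▸ hz)
  have hball : ball z r ⊆ Ω := by
    rw [← hyd]
    intro w hw
    by_contra hwΩ
    have := infDist_le_dist_of_mem (x := z) (show w ∈ Ωᶜ from hwΩ)
    rw [mem_ball, dist_comm] at hw
    linarith
  have hcball : closedBall z r ⊆ closure Ω := by
    rw [← closure_ball z hr0.ne']
    exact closure_mono hball
  have hyc : y ∈ closedBall z r := by rw [mem_closedBall, dist_comm]
  have hyf : y ∈ frontier Ω := by
    rw [hΩ.frontier_eq]
    exact ⟨hcball hyc, hy⟩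
  set a : ℝ := 1 / (4 * n) with ha
  have hn' : (0 : ℝ) < n := by exact_mod_cast hn
  have ha0 : 0 < a := by positivity
  set v : EuclideanSpace ℝ (Fin n) → ℝ := fun x => (u x - a * r ^ 2) + a * ‖x - z‖ ^ 2 with hv
  have huB : ContDiffOn ℝ 2 (fun x => u x - a * r ^ 2) (ball z r) :=
    (hu.mono (hball.trans subset_closure)).sub contDiffOn_const
  have hvB : ContDiffOn ℝ 2 v (ball z r) :=
    huB.add (contDiff_const.mul (contDiff_sqdist z)).contDiffOn
  have hvc : ContinuousOn v (closedBall z r) :=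
    ((hu.continuousOn.mono hcball).sub continuousOn_const).add
      (contDiff_const.mul (contDiff_sqdist (k := 0) z)).continuous.continuousOn
  have hu0 : ∀ x ∈ closure Ω, 0 ≤ u x := by
    intro x hx
    by_cases h : x ∈ Ω
    · exact (hpos x h).le
    · refine (hdir x ?_).ge
      rw [hΩ.frontier_eq]
      exact ⟨hx, h⟩
  have hvfr : ∀ x ∈ sphere z r, 0 ≤ v x := by
    intro x hx
    have h1 := hu0 x (hcball (sphere_subset_closedBall hx))
    rw [mem_sphere, dist_eq_norm] at hx
    simp only [hv, hx]
    linarith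
  have hvlap : ∀ x ∈ ball z r, ∑ i, pd i (pd i v) x < 0 := by
    intro x hx
    have h1 : ∀ i, pd i (pd i v) x = pd i (pd i u) x + 2 * a := by
      intro i
      rw [hv, pd_pd_add_sqdist isOpen_ball huB a z hx]
      congr 2
      funext w
      rw [pd, fderiv_sub_const, ← pd]
    simp only [h1, Finset.sum_add_distrib, hlap x (hball hx), Finset.sum_const, Finset.card_univ,
      Fintype.card_fin, nsmul_eq_mul]
    have : (n : ℝ) * (2 * a) = 1 / 2 := by
      rw [ha]
      field_simp
      norm_num
    linarith
  have hvpos : ∀ x ∈ closedBall z r, 0 ≤ v x := by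
    intro x hx
    by_cases h : x ∈ ball z r
    · refine (superharmonic_pos isOpen_ball isBounded_ball ?_ hvB hvlap ?_ h).le
      · rwa [closure_ball z hr0.ne']
      · rwa [frontier_ball z hr0.ne']
    · refine hvfr x (mem_sphere.2 (le_antisymm hx ?_))
      simpa using h
  have hvy : v y = 0 := by
    have : ‖y - z‖ = r := by rw [← dist_eq_norm, dist_comm]
    simp only [hv, hdir y hyf, this]
    ring
  have hmin : IsLocalMinOn v (closedBall z r) y := by
    refine IsMinOn.localize fun x hx => ?_
    change v y ≤ v x
    rw [hvy]
    exact hvpos x hx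
  set L := fderivWithin ℝ u (closure Ω) y with hL
  have hLd : HasFDerivWithinAt u L (closedBall z r) y :=
    (hu.differentiableOn (by norm_num) y (frontier_subset_closure hyf)).hasFDerivWithinAt.mono
      hcball
  have hsq : HasFDerivAt (fun x => ‖x - z‖ ^ 2) (2 • (innerSL ℝ (y - z))) y :=
    ((hasFDerivAt_id y).sub_const z).norm_sq
  have hvd : HasFDerivWithinAt v (L + a • (2 • (innerSL ℝ (y - z)))) (closedBall z r) y :=
    (hLd.sub_const _).add (hsq.const_mul a).hasFDerivWithinAt
  have hcone : z - y ∈ posTangentConeAt (closedBall z r) y :=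
    sub_mem_posTangentConeAt_of_segment_subset
      ((convex_closedBall z r).segment_subset hyc (mem_closedBall_self hr0.le))
  have hnn := hmin.hasFDerivWithinAt_nonneg hvd hcone
  have hin : ⟪y - z, z - y⟫ = -r ^ 2 := by
    rw [← neg_sub y z, inner_neg_right, real_inner_self_eq_norm_sq, ← dist_eq_norm, dist_comm]
  have hLpos : 0 < L (z - y) := by
    simp only [add_apply, smul_apply, innerSL_apply_apply,
      hin, smul_eq_mul, nsmul_eq_mul] at hnn
    have : 0 < a * r ^ 2 := by positivity
    push_cast at hnn
    nlinarith
  intro hc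
  have hsum := sum_sq_fderivWithin_frontier hbd hu hdir hyf
  rw [hneu y hyf, hc, zero_pow two_ne_zero,
    Finset.sum_eq_zero_iff_of_nonneg fun i _ => sq_nonneg _] at hsum
  have hL0 : L = 0 := by
    ext w
    have hw : w = ∑ i, w i • EuclideanSpace.single i (1 : ℝ) := by
      ext j
      simp [Finset.sum_apply, Pi.single_apply]
    rw [hw, map_sum]
    simp only [map_smul]
    refine Finset.sum_eq_zero fun i hi => ?_
    rw [pow_eq_zero_iff two_ne_zero |>.1 (hsum i hi), smul_zero]
  rw [hL0] at hLpos
  simp at hLpos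

end Boundary
/-! ### From the Hessian to the ball -/

section Conclusion

variable {n : ℕ} {Ω : Set (EuclideanSpace ℝ (Fin n))} {u : EuclideanSpace ℝ (Fin n) → ℝ}

/-- The equality case of the Cauchy-Schwarz inequality `(tr D²u)² ≤ n |D²u|²`. -/
lemma pd_pd_eq_of_hessSq_le (hn : 0 < n) {x : EuclideanSpace ℝ (Fin n)}
    (hlap : ∑ j, pd j (pd j u) x = -1) (h : hessSq u x ≤ 1 / n) (i j : Fin n) :
    pd j (pd i u) x = if i = j then -(1 / n : ℝ) else 0 := by
  have hn' : (n : ℝ) ≠ 0 := by exact_mod_cast hn.ne'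
  have key : ∑ i, ∑ j, (pd j (pd i u) x - if i = j then -(1 / n : ℝ) else 0) ^ 2 ≤ 0 := by
    have h1 : ∀ i j : Fin n, (pd j (pd i u) x - if i = j then -(1 / n : ℝ) else 0) ^ 2 =
        pd j (pd i u) x ^ 2 + if i = j then 2 / n * pd j (pd i u) x + 1 / n ^ 2 else 0 := by
      intro i j
      split_ifs
      · ring
      · ring
    simp only [h1, Finset.sum_add_distrib, Finset.sum_ite_eq, Finset.mem_univ, if_true]
    rw [← Finset.mul_sum, hlap, Finset.sum_const, Finset.card_univ, Fintype.card_fin, nsmul_eq_mul]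
    rw [hessSq] at h
    have : (2 / n * -1 + n * (1 / n ^ 2) : ℝ) = -(1 / n) := by
      field_simp
      ring
    linarith
  have h2 : ∀ i, 0 ≤ ∑ j, (pd j (pd i u) x - if i = j then -(1 / n : ℝ) else 0) ^ 2 :=
    fun i => Finset.sum_nonneg fun j _ => sq_nonneg _
  have h3 := (Finset.sum_eq_zero_iff_of_nonneg fun i _ => h2 i).1
    (le_antisymm key (Finset.sum_nonneg fun i _ => h2 i)) i (Finset.mem_univ i)
  have h4 := (Finset.sum_eq_zero_iff_of_nonneg fun j _ => sq_nonneg _).1 h3 j (Finset.mem_univ j)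
  exact sub_eq_zero.1 ((pow_eq_zero_iff two_ne_zero).1 h4)

lemma const_of_pd_eq_zero (hΩ : IsOpen Ω) (hconn : IsPreconnected Ω) (hu : ContDiffOn ℝ 1 u Ω)
    (h : ∀ x ∈ Ω, ∀ i, pd i u x = 0) : ∃ a, ∀ x ∈ Ω, u x = a := by
  refine hΩ.exists_is_const_of_fderiv_eq_zero hconn (hu.differentiableOn (by norm_num))
    fun x hx => ?_
  ext w
  have hw : w = ∑ i, w i • EuclideanSpace.single i (1 : ℝ) := by
    ext j
    simp [Finset.sum_apply, Pi.single_apply]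
  rw [hw, map_sum]
  simp only [map_smul]
  refine Finset.sum_eq_zero fun i _ => ?_
  have := h x hx i
  rw [pd] at this
  rw [this, smul_zero]

/-- A function with Hessian `-I/n` on a connected open set is a paraboloid. -/
lemma exists_paraboloid (hn : 0 < n) (hΩ : IsOpen Ω) (hconn : IsPreconnected Ω)
    (hu : ContDiffOn ℝ 2 u Ω)
    (h : ∀ x ∈ Ω, ∀ i j, pd j (pd i u) x = if i = j then -(1 / n : ℝ) else 0) :
    ∃ (x₀ : EuclideanSpace ℝ (Fin n)) (A : ℝ), ∀ x ∈ Ω, u x = (A - ‖x - x₀‖ ^ 2) / (2 * n) := by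
  have hn' : (n : ℝ) ≠ 0 := by exact_mod_cast hn.ne'
  have h1 : ∀ i, ∃ a, ∀ x ∈ Ω, pd i u x + 1 / n * x i = a := by
    intro i
    have hc : ContDiff ℝ 1 fun y : EuclideanSpace ℝ (Fin n) => y i :=
      (EuclideanSpace.proj i : EuclideanSpace ℝ (Fin n) →L[ℝ] ℝ).contDiff
    have hp := contDiffOn_pd hΩ hu (m := 1) (by norm_num) i
    refine const_of_pd_eq_zero hΩ hconn (hp.add (contDiff_const.mul hc).contDiffOn)
      fun x hx j => ?_
    rw [pd_add_const_mul hΩ hp hc _ hx, h x hx, pd_coord]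
    split_ifs <;> ring
  choose a ha using h1
  set x₀ : EuclideanSpace ℝ (Fin n) := WithLp.toLp 2 fun i => n * a i with hx₀
  obtain ⟨A, hA⟩ : ∃ A, ∀ x ∈ Ω, u x + 1 / (2 * n) * ‖x - x₀‖ ^ 2 = A := by
    refine const_of_pd_eq_zero hΩ hconn ((hu.of_le (by norm_num)).add
      (contDiff_const.mul (contDiff_sqdist x₀)).contDiffOn) fun x hx i => ?_
    rw [pd_add_const_mul hΩ (hu.of_le (by norm_num)) (contDiff_sqdist x₀) _ hx, pd_sqdist]
    have h2 := ha i x hx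
    have h3 : x₀ i = n * a i := rfl
    rw [h3, ← h2]
    field_simp
    ring
  refine ⟨x₀, 2 * n * A, fun x hx => ?_⟩
  rw [← hA x hx]
  field_simp
  ring

/-- A domain carrying a paraboloid that is positive inside and zero on the boundary is a
ball. -/
lemma eq_ball_of_paraboloid (hn : 0 < n) (hΩ : IsOpen Ω) (hne : Ω.Nonempty)
    (huc : ContinuousOn u (closure Ω)) (hdir : ∀ x ∈ frontier Ω, u x = 0)
    (hpos : ∀ x ∈ Ω, 0 < u x) {x₀ : EuclideanSpace ℝ (Fin n)} {A : ℝ}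
    (h : ∀ x ∈ Ω, u x = (A - ‖x - x₀‖ ^ 2) / (2 * n)) :
    ∃ R : ℝ, 0 < R ∧ Ω = ball x₀ R ∧
      ∀ x ∈ closure Ω, u x = (R ^ 2 - ‖x - x₀‖ ^ 2) / (2 * n) := by
  have hn' : (0 : ℝ) < n := by exact_mod_cast hn
  have hclos : ∀ x ∈ closure Ω, u x = (A - ‖x - x₀‖ ^ 2) / (2 * n) := by
    have hcont : Continuous fun x : EuclideanSpace ℝ (Fin n) => (A - ‖x - x₀‖ ^ 2) / (2 * n) := by
      fun_prop
    exact EqOn.of_subset_closure (s := Ω) (fun x hx => h x hx) huc hcont.continuousOn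
      subset_closure Subset.rfl
  have hlt : ∀ x ∈ Ω, ‖x - x₀‖ ^ 2 < A := by
    intro x hx
    have h1 := hpos x hx
    rw [h x hx, div_pos_iff_of_pos_right (by positivity)] at h1
    linarith
  obtain ⟨z, hz⟩ := hne
  have hA : 0 < A := (sq_nonneg _).trans_lt (hlt z hz)
  have hR : √A ^ 2 = A := Real.sq_sqrt hA.le
  have hR0 : 0 < √A := Real.sqrt_pos.2 hA
  have hsub : Ω ⊆ ball x₀ √A := by
    intro x hx
    rw [mem_ball, dist_eq_norm]
    exact Real.lt_sqrt_of_sq_lt (hlt x hx)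
  have hfr : Disjoint (ball x₀ √A) (frontier Ω) := by
    rw [disjoint_right]
    intro x hx hxb
    have h1 := hclos x (frontier_subset_closure hx)
    rw [hdir x hx, eq_comm, div_eq_zero_iff, or_iff_left (by positivity)] at h1
    rw [mem_ball, dist_eq_norm, Real.lt_sqrt (norm_nonneg _)] at hxb
    linarith
  refine ⟨√A, hR0, hsub.antisymm ?_, by rwa [hR]⟩
  -- The ball is connected, meets `Ω` and misses its boundary.
  refine IsPreconnected.subset_left_of_subset_union hΩ isClosed_closure.isOpen_compl
    (disjoint_compl_right_iff_subset.2 subset_closure) (fun x hx => ?_) ⟨z, hsub hz, hz⟩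
    (convex_ball x₀ _).isPreconnected
  by_contra! hx'
  rw [mem_union, not_or, notMem_compl_iff] at hx'
  refine disjoint_left.1 hfr hx ?_
  rw [hΩ.frontier_eq]
  exact ⟨hx'.2, hx'.1⟩

end Conclusion

/-- **Serrin's symmetry theorem.** If the overdetermined torsion problem
`-Δu = 1` in `Ω`, `u = 0` on `∂Ω`, `∂u/∂ν = c` on `∂Ω` has a solution `u ∈ C²(cl Ω)` on a
bounded, open, connected `C²` domain `Ω ⊆ ℝⁿ`, then `Ω` is a ball `B_R(x₀)` and
`u(x) = (R² - |x - x₀|²)/(2n)`. -/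
theorem serrin_overdetermined_torsion {n : ℕ} (hn : 0 < n)
    (Ω : Set (EuclideanSpace ℝ (Fin n)))
    (ν : EuclideanSpace ℝ (Fin n) → EuclideanSpace ℝ (Fin n))
    (hΩo : IsOpen Ω) (hΩconn : IsConnected Ω) (hΩb : IsBounded Ω)
    (hΩbd : IsC2DomainWithInnerNormal Ω ν)
    (u : EuclideanSpace ℝ (Fin n) → ℝ) (c : ℝ)
    (hu : ContDiffOn ℝ 2 u (closure Ω))
    (heq : ∀ x ∈ Ω, lap u x = -1)
    (hdir : ∀ x ∈ frontier Ω, u x = 0)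
    (hneu : ∀ x ∈ frontier Ω, fderivWithin ℝ u (closure Ω) x (ν x) = c) :
    ∃ (x₀ : EuclideanSpace ℝ (Fin n)) (R : ℝ), 0 < R ∧ Ω = Metric.ball x₀ R ∧
      ∀ x ∈ closure Ω, u x = (R ^ 2 - ‖x - x₀‖ ^ 2) / (2 * n) := by
  have huΩ : ContDiffOn ℝ 2 u Ω := hu.mono subset_closure
  have hlap : ∀ x ∈ Ω, ∑ j, pd j (pd j u) x = -1 := fun x hx => by
    rw [← lap_eq hΩo huΩ hx, heq x hx]
  have hpos : ∀ x ∈ Ω, 0 < u x := fun x hx =>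
    superharmonic_pos hΩo hΩb hu.continuousOn huΩ (fun y hy => by rw [hlap y hy]; norm_num)
      (fun y hy => (hdir y hy).ge) hx
  have hc : c ≠ 0 :=
    normal_deriv_ne_zero hn hΩo hΩb hΩconn.nonempty hΩbd hu hdir hpos hlap hneu
  -- The extension of `u` by zero is continuous on the whole space.
  set w : EuclideanSpace ℝ (Fin n) → ℝ := Ω.indicator u with hw
  have hwu : ∀ x ∈ Ω, w =ᶠ[𝓝 x] u := fun x hx => by
    filter_upwards [hΩo.mem_nhds hx] with y hy using indicator_of_mem hy u
  have hpdw : ∀ x ∈ Ω, ∀ i, pd i w x = pd i u x := fun x hx i => pd_congr (hwu x hx) i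
  have hpdpdw : ∀ x ∈ Ω, ∀ i j, pd j (pd i w) x = pd j (pd i u) x := fun x hx i j =>
    pd_congr (by filter_upwards [hΩo.mem_nhds hx] with y hy using hpdw y hy i) j
  have hwc : Continuous w := by
    have h1 : w = (closure Ω).indicator u := by
      funext x
      by_cases hx : x ∈ Ω
      · rw [hw, indicator_of_mem hx, indicator_of_mem (subset_closure hx)]
      · rw [hw, indicator_of_notMem hx]
        by_cases hxc : x ∈ closure Ω
        · rw [indicator_of_mem hxc, hdir x (by rw [hΩo.frontier_eq]; exact ⟨hxc, hx⟩)]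
        · rw [indicator_of_notMem hxc]
    rw [h1]
    exact continuous_indicator (fun x hx => hdir x (frontier_closure_subset hx))
      (by rw [closure_closure]; exact hu.continuousOn)
  have hhess : ∀ x ∈ Ω, hessSq u x ≤ 1 / n := by
    intro x hx
    have h1 : hessSq w x ≤ 1 / n := by
      refine hessSq_le hn hΩo hΩb hwc (huΩ.congr fun y hy => indicator_of_mem hy u)
        (fun y hy => ?_) (fun y hy => indicator_of_notMem hy u) (fun y hy => ?_) hc
        (fun δ hδ => ?_) hx
      · rw [hw, indicator_of_mem hy]
        exact hpos y hy
      · simp only [hpdpdw y hy, hlap y hy]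
      · obtain ⟨ε, hε, h⟩ :=
          gradSq_near_boundary hΩo hΩb hΩbd hu hdir hpos hneu δ hδ
        refine ⟨ε, hε, fun y hy hyε => ?_⟩
        rw [hw, indicator_of_mem hy] at hyε
        have := h y hy hyε
        simpa only [gradSq, hpdw y hy] using this
    simpa only [hessSq, hpdpdw x hx] using h1
  obtain ⟨x₀, A, hA⟩ := exists_paraboloid hn hΩo hΩconn.isPreconnected huΩ
    fun x hx => pd_pd_eq_of_hessSq_le hn (hlap x hx) (hhess x hx)
  exact ⟨x₀, eq_ball_of_paraboloid hn hΩo hΩconn.nonempty hu.continuousOn hdir hpos hA⟩
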